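/- arXiv:2509.24583 — 3 statements merged into one kernel-verified Lean document; each statement's English description precedes it below -/
import Mathlib

section
/- For every d ≥ 3, modal logic ML does not enjoy the Craig interpolation property over T^d. In particular, for d = 3, letting φ = ◇(a∧b) ∧ ◇(a∧¬b) and φ' = ◇(¬a∧c) ∧ ◇(¬a∧¬c), we have φ ⊨ ¬φ' over T^3, yet there is no ML-formula ψ with sig(ψ) ⊆ {a} such that φ ⊨ ψ and ψ ⊨ ¬φ' over T^3. -/
/-- Formulae of the modal μ-calculus (in negation normal form). -/
inductive Form : Type
  | pos : ℕ → Form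
  | neg : ℕ → Form
  | or  : Form → Form → Form
  | and : Form → Form → Form
  | dia : Form → Form
  | box : Form → Form
  | var : ℕ → Form
  | mu  : ℕ → Form → Form
  | nu  : ℕ → Form → Form

namespace Form

/-- Fixpoint-free formulae: modal logic ML. -/
def IsML : Form → Prop
  | pos _ => True
  | neg _ => True
  | or φ ψ => IsML φ ∧ IsML ψ
  | and φ ψ => IsML φ ∧ IsML ψ
  | dia φ => IsML φ
  | box φ => IsML φ
  | var _ => False
  | mu _ _ => False
  | nu _ _ => False

/-- Modal depth: maximal nesting of ◇ and □. -/
def depth : Form → ℕ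
  | pos _ => 0
  | neg _ => 0
  | or φ ψ => max φ.depth ψ.depth
  | and φ ψ => max φ.depth ψ.depth
  | dia φ => φ.depth + 1
  | box φ => φ.depth + 1
  | var _ => 0
  | mu _ φ => φ.depth
  | nu _ φ => φ.depth

/-- The set of propositions occurring in a formula. -/
def sig : Form → Set ℕ
  | pos p => {p}
  | neg p => {p}
  | or φ ψ => φ.sig ∪ ψ.sig
  | and φ ψ => φ.sig ∪ ψ.sig
  | dia φ => φ.sig
  | box φ => φ.sig
  | var _ => ∅
  | mu _ φ => φ.sig
  | nu _ φ => φ.sig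

/-- The size of a formula (its length as a string, up to a constant factor). -/
def size : Form → ℕ
  | pos _ => 1
  | neg _ => 2
  | or φ ψ => φ.size + ψ.size + 1
  | and φ ψ => φ.size + ψ.size + 1
  | dia φ => φ.size + 1
  | box φ => φ.size + 1
  | var _ => 1
  | mu _ φ => φ.size + 2
  | nu _ φ => φ.size + 2

end Form

/-- A set has at least `g` elements. -/
def AtLeastCard {W : Type} (g : ℕ) (S : Set W) : Prop :=
  ∃ f : Fin g → W, Function.Injective f ∧ ∀ i, f i ∈ S

/-- Pointed Kripke structures. -/
structure Model : Type 1 where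
  W : Type
  root : W
  R : W → W → Prop
  val : W → ℕ → Prop

namespace Model

/-- Semantics of the μ-calculus, via Knaster–Tarski style clauses. -/
def interp (M : Model) : Form → (ℕ → Set M.W) → Set M.W
  | .pos p, _ => {w | M.val w p}
  | .neg p, _ => {w | ¬ M.val w p}
  | .or φ ψ, e => M.interp φ e ∪ M.interp ψ e
  | .and φ ψ, e => M.interp φ e ∩ M.interp ψ e
  | .dia φ, e => {w | ∃ v, M.R w v ∧ v ∈ M.interp φ e}
  | .box φ, e => {w | ∀ v, M.R w v → v ∈ M.interp φ e}
  | .var x, e => e x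
  | .mu x φ, e => sInf {S : Set M.W | M.interp φ (Function.update e x S) ⊆ S}
  | .nu x φ, e => sSup {S : Set M.W | S ⊆ M.interp φ (Function.update e x S)}

/-- `M ⊨ φ`: the root of `M` satisfies `φ`. -/
def Sat (M : Model) (φ : Form) : Prop := M.root ∈ M.interp φ fun _ => ∅

/-- Points reachable from the root in exactly `k` steps (in a tree: points of depth `k`). -/
def stepsTo (M : Model) : ℕ → M.W → Prop
  | 0, w => w = M.root
  | (k+1), w => ∃ v, M.stepsTo k v ∧ M.R v w

/-- Membership in the `n`-prefix: depth at most `n`. -/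
def InPrefix (M : Model) (n : ℕ) (w : M.W) : Prop := ∃ k ≤ n, M.stepsTo k w

/-- Tree models: every point is reachable from the root, the root has no predecessor,
and every point has at most one predecessor. -/
def IsTree (M : Model) : Prop :=
  (∀ w, Relation.ReflTransGen M.R M.root w) ∧
  (∀ w, ¬ M.R w M.root) ∧
  (∀ w v v', M.R v w → M.R v' w → v = v')

/-- Outdegree at most `d`. -/
def outdegLE (M : Model) (d : ℕ) : Prop :=
  ∀ w, ¬ AtLeastCard (d+1) {v | M.R w v}

end Model

/-- The class `T^d` of all tree models of outdegree at most `d`. -/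
def TreeC (d : ℕ) : Set Model := {M | M.IsTree ∧ M.outdegLE d}

/-- `(σ,n)`-bisimulations: bisimulations between the `n`-prefixes of the `σ`-reducts,
relating only points of equal depth and linking the roots. -/
structure IsNBisim (M M' : Model) (σ : Set ℕ) (n : ℕ) (Z : M.W → M'.W → Prop) : Prop where
  root : Z M.root M'.root
  depthEq : ∀ ⦃w w'⦄, Z w w' → ∃ k ≤ n, M.stepsTo k w ∧ M'.stepsTo k w'
  base : ∀ ⦃w w'⦄, Z w w' → ∀ p ∈ σ, (M.val w p ↔ M'.val w' p)
  forth : ∀ ⦃w w'⦄, Z w w' → ∀ k, k < n → M.stepsTo k w →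
      ∀ v, M.R w v → ∃ v', M'.R w' v' ∧ Z v v'
  back : ∀ ⦃w w'⦄, Z w w' → ∀ k, k < n → M'.stepsTo k w' →
      ∀ v', M'.R w' v' → ∃ v, M.R w v ∧ Z v v'

/-- `(σ,n)`-isomorphisms: `(σ,n)`-bisimulations bijective on the `n`-prefixes. -/
def IsNIso (M M' : Model) (σ : Set ℕ) (n : ℕ) (Z : M.W → M'.W → Prop) : Prop :=
  IsNBisim M M' σ n Z ∧
  (∀ w w₁' w₂', Z w w₁' → Z w w₂' → w₁' = w₂') ∧
  (∀ w₁ w₂ w', Z w₁ w' → Z w₂ w' → w₁ = w₂) ∧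
  (∀ w, M.InPrefix n w → ∃ w', Z w w') ∧
  (∀ w', M'.InPrefix n w' → ∃ w, Z w w')

/-- `M ≈ⁿ_σ M'`. -/
def NBisimEq (M M' : Model) (σ : Set ℕ) (n : ℕ) : Prop := ∃ Z, IsNBisim M M' σ n Z

/-- `M ≅ⁿ_σ M'`. -/
def NIsoEq (M M' : Model) (σ : Set ℕ) (n : ℕ) : Prop := ∃ Z, IsNIso M M' σ n Z

/-- `ψ` separates `φ` from `φ'` over the class `C`: `φ ⊨ ψ` and `ψ ⊨ ¬φ'` over `C`. -/
def Separates (C : Set Model) (ψ φ φ' : Form) : Prop :=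
  (∀ M ∈ C, M.Sat φ → M.Sat ψ) ∧ (∀ M ∈ C, M.Sat ψ → ¬ M.Sat φ')

/-- ML enjoys the Craig interpolation property over a class `C`. -/
def MLCIP (C : Set Model) : Prop :=
  ∀ φ φ' : Form, φ.IsML → φ'.IsML → (∀ M ∈ C, M.Sat φ → M.Sat φ') →
    ∃ ψ : Form, ψ.IsML ∧ ψ.sig ⊆ φ.sig ∩ φ'.sig ∧
      (∀ M ∈ C, M.Sat φ → M.Sat ψ) ∧ (∀ M ∈ C, M.Sat ψ → M.Sat φ')

/-- `φ = ◇(a∧b) ∧ ◇(a∧¬b)` with `a = 0`, `b = 1`. -/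
def phiCE : Form := .and (.dia (.and (.pos 0) (.pos 1))) (.dia (.and (.pos 0) (.neg 1)))

/-- `φ' = ◇(¬a∧c) ∧ ◇(¬a∧¬c)` with `a = 0`, `c = 2`. -/
def phiCE' : Form := .and (.dia (.and (.neg 0) (.pos 2))) (.dia (.and (.neg 0) (.neg 2)))

namespace Model

/-- ML-formulae over `σ` are invariant under bisimulations of `σ`-reducts. -/
theorem interp_iff_of_bisim {M M' : Model} {σ : Set ℕ} {Z : M.W → M'.W → Prop}
    (base : ∀ w w', Z w w' → ∀ p ∈ σ, (M.val w p ↔ M'.val w' p))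
    (forth : ∀ w w', Z w w' → ∀ v, M.R w v → ∃ v', M'.R w' v' ∧ Z v v')
    (back : ∀ w w', Z w w' → ∀ v', M'.R w' v' → ∃ v, M.R w v ∧ Z v v')
    (e : ℕ → Set M.W) (e' : ℕ → Set M'.W) :
    ∀ ψ : Form, ψ.IsML → ψ.sig ⊆ σ → ∀ w w', Z w w' →
      (w ∈ M.interp ψ e ↔ w' ∈ M'.interp ψ e') := by
  intro ψ
  induction ψ with
  | pos p => exact fun _ hs w w' hZ => base w w' hZ p (hs rfl)
  | neg p => exact fun _ hs w w' hZ => not_congr (base w w' hZ p (hs rfl))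
  | or φ ψ ihφ ihψ =>
    intro hML hs w w' hZ
    have hs := Set.union_subset_iff.1 hs
    exact or_congr (ihφ hML.1 hs.1 w w' hZ) (ihψ hML.2 hs.2 w w' hZ)
  | and φ ψ ihφ ihψ =>
    intro hML hs w w' hZ
    have hs := Set.union_subset_iff.1 hs
    exact and_congr (ihφ hML.1 hs.1 w w' hZ) (ihψ hML.2 hs.2 w w' hZ)
  | dia φ ih =>
    intro hML hs w w' hZ
    constructor
    · rintro ⟨v, hR, hv⟩
      obtain ⟨v', hR', hZ'⟩ := forth w w' hZ v hR
      exact ⟨v', hR', (ih hML hs v v' hZ').1 hv⟩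
    · rintro ⟨v', hR', hv'⟩
      obtain ⟨v, hR, hZ'⟩ := back w w' hZ v' hR'
      exact ⟨v, hR, (ih hML hs v v' hZ').2 hv'⟩
  | box φ ih =>
    intro hML hs w w' hZ
    constructor
    · intro h v' hR'
      obtain ⟨v, hR, hZ'⟩ := back w w' hZ v' hR'
      exact (ih hML hs v v' hZ').1 (h v hR)
    · intro h v hR
      obtain ⟨v', hR', hZ'⟩ := forth w w' hZ v hR
      exact (ih hML hs v v' hZ').2 (h v' hR')
  | var x => exact fun h => h.elim
  | mu x φ _ => exact fun h => h.elim
  | nu x φ _ => exact fun h => h.elim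

/-- The tree of height one whose root satisfies no proposition and whose leaves
are labelled by `f`. -/
def star {n : ℕ} (f : Fin n → ℕ → Prop) : Model where
  W := Option (Fin n)
  root := none
  R w v := w = none ∧ v ≠ none
  val w p := ∃ i, w = some i ∧ f i p

theorem star_mem_treeC {n d : ℕ} (hn : n ≤ d) (f : Fin n → ℕ → Prop) : star f ∈ TreeC d := by
  refine ⟨⟨?_, fun w h => h.2 rfl, fun w v v' h h' => h.1.trans h'.1.symm⟩, ?_⟩
  · rintro (_ | i)
    · exact .refl
    · exact .single ⟨rfl, Option.some_ne_none i⟩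
  · rintro w ⟨g, hg, hR⟩
    choose k hk using fun i => Option.ne_none_iff_exists.1 (hR i).2
    have hinj : Function.Injective k := fun i j hij => hg (by rw [← hk i, ← hk j, hij])
    have hcard := Fintype.card_le_of_injective k hinj
    simp only [Fintype.card_fin] at hcard
    omega

/-- Two stars whose sets of leaf labels agree on `σ` satisfy the same ML-formulae over `σ`. -/
theorem star_sat_iff {m n : ℕ} {f : Fin m → ℕ → Prop} {g : Fin n → ℕ → Prop} {σ : Set ℕ}
    (forth : ∀ i, ∃ j, ∀ p ∈ σ, (f i p ↔ g j p)) (back : ∀ j, ∃ i, ∀ p ∈ σ, (f i p ↔ g j p))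
    {ψ : Form} (hML : ψ.IsML) (hs : ψ.sig ⊆ σ) : (star f).Sat ψ ↔ (star g).Sat ψ := by
  refine interp_iff_of_bisim (M := star f) (M' := star g) (σ := σ)
    (Z := fun w w' => (w = none ∧ w' = none) ∨
      ∃ i j, w = some i ∧ w' = some j ∧ ∀ p ∈ σ, (f i p ↔ g j p))
    ?_ ?_ ?_ _ _ ψ hML hs _ _ (Or.inl ⟨rfl, rfl⟩)
  · rintro w w' (⟨rfl, rfl⟩ | ⟨i, j, rfl, rfl, h⟩) p hp
    · simp [star]
    · simpa [star] using h p hp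
  · rintro w w' (⟨rfl, rfl⟩ | ⟨i, j, rfl, rfl, h⟩) v ⟨hw, hv⟩
    · obtain ⟨i, rfl⟩ := Option.ne_none_iff_exists'.1 hv
      obtain ⟨j, hj⟩ := forth i
      exact ⟨some j, ⟨rfl, Option.some_ne_none j⟩, Or.inr ⟨i, j, rfl, rfl, hj⟩⟩
    · exact absurd hw (Option.some_ne_none i)
  · rintro w w' (⟨rfl, rfl⟩ | ⟨i, j, rfl, rfl, h⟩) v ⟨hw, hv⟩
    · obtain ⟨j, rfl⟩ := Option.ne_none_iff_exists'.1 hv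
      obtain ⟨i, hi⟩ := back j
      exact ⟨some i, ⟨rfl, Option.some_ne_none i⟩, Or.inr ⟨i, j, rfl, rfl, hi⟩⟩
    · exact absurd hw (Option.some_ne_none j)

/-- Three leaves, labelled `{a, b}`, `{a}` and `∅`. -/
def twoPosStar : Model :=
  star fun (i : Fin 3) p => (i ≠ 2 ∧ p = 0) ∨ (i = 0 ∧ p = 1)

/-- One leaf labelled `{a}`, and `d - 1` leaves labelled by distinct propositions `p ≥ 2`. -/
def onePosStar (d : ℕ) : Model :=
  star fun (i : Fin d) p => if i.val = 0 then p = 0 else p = i.val + 1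

theorem twoPosStar_sat_iff {d : ℕ} (hd : 3 ≤ d) {ψ : Form} (hML : ψ.IsML) (hs : ψ.sig ⊆ {0}) :
    twoPosStar.Sat ψ ↔ (onePosStar d).Sat ψ := by
  refine star_sat_iff (fun i => ?_) (fun j => ?_) hML hs
  · by_cases hi : i = 2
    · exact ⟨⟨1, by omega⟩, by simp [hi]⟩
    · exact ⟨⟨0, by omega⟩, by simp [hi]⟩
  · by_cases hj : j.val = 0
    · exact ⟨0, by simp [hj]⟩
    · exact ⟨2, by simp [hj]⟩

theorem twoPosStar_sat_phiCE : twoPosStar.Sat phiCE :=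
  ⟨⟨some 0, ⟨rfl, Option.some_ne_none _⟩, ⟨0, rfl, by simp⟩, ⟨0, rfl, by simp⟩⟩,
    ⟨some 1, ⟨rfl, Option.some_ne_none _⟩, ⟨1, rfl, by simp⟩, by
      rintro ⟨i, hi, h⟩
      obtain rfl := Option.some_injective _ hi
      simp at h⟩⟩

theorem onePosStar_val_some {d : ℕ} (i : Fin d) (p : ℕ) :
    (onePosStar d).val (some i) p ↔ if i.val = 0 then p = 0 else p = i.val + 1 := by
  constructor
  · rintro ⟨j, hj, h⟩
    obtain rfl := Option.some_injective _ hj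
    exact h
  · exact fun h => ⟨i, rfl, h⟩

theorem onePosStar_sat_phiCE' : (onePosStar 3).Sat phiCE' := by
  refine ⟨⟨some 1, ⟨rfl, Option.some_ne_none _⟩, ?_, ?_⟩,
    ⟨some 2, ⟨rfl, Option.some_ne_none _⟩, ?_, ?_⟩⟩
  · exact fun h => by simpa using (onePosStar_val_some _ _).1 h
  · exact (onePosStar_val_some _ _).2 (by simp)
  · exact fun h => by simpa using (onePosStar_val_some _ _).1 h
  · exact fun h => by simpa using (onePosStar_val_some _ _).1 h

/-- `φ` provides two successors satisfying `a`, to be added to any family of distinct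
successors violating `a`. -/
theorem atLeastCard_of_sat_phiCE {M : Model} (h : M.Sat phiCE) {m : ℕ} {v : Fin m → M.W}
    (hv : Function.Injective v) (hR : ∀ i, M.R M.root (v i)) (ha : ∀ i, ¬ M.val (v i) 0) :
    AtLeastCard (m + 2) {w | M.R M.root w} := by
  obtain ⟨⟨u, hu, hua, hub⟩, ⟨u', hu', hua', hub'⟩⟩ := h
  refine ⟨Fin.cons u (Fin.cons u' v), ?_, ?_⟩
  · rw [Fin.cons_injective_iff, Fin.cons_injective_iff]
    refine ⟨?_, ?_, hv⟩
    · rintro ⟨i, hi⟩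
      induction i using Fin.cases with
      | zero => exact hub' (by rw [Fin.cons_zero] at hi; exact hi ▸ hub)
      | succ i => exact ha i (by rw [Fin.cons_succ] at hi; exact hi ▸ hua)
    · rintro ⟨i, rfl⟩
      exact ha i hua'
  · intro i
    refine Fin.cases hu (fun i => ?_) i
    exact Fin.cases hu' hR i

theorem not_sat_phiCE'_of_sat_phiCE {M : Model} (hM : M ∈ TreeC 3) (h : M.Sat phiCE) :
    ¬ M.Sat phiCE' := by
  rintro ⟨⟨u, hu, hua, huc⟩, ⟨u', hu', hua', huc'⟩⟩
  have hne : u ≠ u' := by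
    rintro rfl
    exact huc' huc
  refine hM.2 M.root (atLeastCard_of_sat_phiCE (v := ![u, u']) h ?_ ?_ ?_)
  · intro i j
    fin_cases i <;> fin_cases j <;> simp [hne, hne.symm]
  · exact Fin.forall_fin_two.2 ⟨hu, hu'⟩
  · exact Fin.forall_fin_two.2 ⟨hua, hua'⟩

end Model

namespace Form

/-- The disjunction of `a` and the propositions `j + 2` for `j < i`. -/
def orUpTo : ℕ → Form
  | 0 => pos 0
  | i + 1 => or (pos (i + 2)) (orUpTo i)

/-- For some `i < n`, no successor violating `a` has `i + 2` as its first proposition `≥ 2`;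
the negation forces `n` distinct successors violating `a`. -/
def missesSome : ℕ → Form
  | 0 => and (pos 0) (neg 0)
  | n + 1 => or (box (or (neg (n + 2)) (orUpTo n))) (missesSome n)

theorem isML_orUpTo : ∀ i, (orUpTo i).IsML
  | 0 => trivial
  | i + 1 => ⟨trivial, isML_orUpTo i⟩

theorem isML_missesSome : ∀ n, (missesSome n).IsML
  | 0 => ⟨trivial, trivial⟩
  | n + 1 => ⟨⟨trivial, isML_orUpTo n⟩, isML_missesSome n⟩

theorem one_notMem_sig_orUpTo (i : ℕ) : 1 ∉ (orUpTo i).sig := by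
  induction i with
  | zero => simp [orUpTo, sig]
  | succ i ih => simp [orUpTo, sig, ih]

theorem one_notMem_sig_missesSome (n : ℕ) : 1 ∉ (missesSome n).sig := by
  induction n with
  | zero => simp [missesSome, sig]
  | succ n ih => simp [missesSome, sig, ih, one_notMem_sig_orUpTo]

end Form

namespace Model

theorem mem_interp_orUpTo {M : Model} {e : ℕ → Set M.W} {w : M.W} (i : ℕ) :
    w ∈ M.interp (.orUpTo i) e ↔ M.val w 0 ∨ ∃ j < i, M.val w (j + 2) := by
  induction i with
  | zero => simp [Form.orUpTo, interp]
  | succ i ih =>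
    have : w ∈ M.interp (.orUpTo (i + 1)) e ↔ M.val w (i + 2) ∨ w ∈ M.interp (.orUpTo i) e :=
      Iff.rfl
    rw [this, ih, Nat.exists_lt_succ_right, or_comm, or_assoc]

theorem not_mem_interp_missesSome {M : Model} {e : ℕ → Set M.W} {w : M.W} (n : ℕ) :
    w ∉ M.interp (.missesSome n) e ↔ ∀ i < n, ∃ v, M.R w v ∧ ¬ M.val v 0 ∧
      M.val v (i + 2) ∧ ∀ j < i, ¬ M.val v (j + 2) := by
  induction n with
  | zero => simp [Form.missesSome, interp]
  | succ n ih =>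
    have : w ∈ M.interp (.missesSome (n + 1)) e ↔
        (∀ v, M.R w v → ¬ M.val v (n + 2) ∨ v ∈ M.interp (.orUpTo n) e) ∨
          w ∈ M.interp (.missesSome n) e := Iff.rfl
    rw [this, not_or, ih, Nat.forall_lt_succ_right, and_comm]
    simp only [mem_interp_orUpTo]
    push Not
    refine and_congr_right fun _ => exists_congr fun v => ?_
    tauto

theorem sat_missesSome_of_sat_phiCE {M : Model} {n : ℕ} (hM : M ∈ TreeC (n + 1))
    (h : M.Sat phiCE) : M.Sat (.missesSome n) := by
  by_contra hn
  have hn := (not_mem_interp_missesSome n).1 hn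
  choose v hR ha hp hlt using fun i : Fin n => hn i i.isLt
  refine hM.2 M.root (atLeastCard_of_sat_phiCE h (v := v) ?_ hR ha)
  intro i j hij
  rcases lt_trichotomy i j with hlt' | rfl | hlt'
  · exact absurd (hij ▸ hp i) (hlt j i hlt')
  · rfl
  · exact absurd (hij ▸ hp j) (hlt i j hlt')

theorem not_onePosStar_sat_missesSome (n : ℕ) : ¬ (onePosStar (n + 1)).Sat (.missesSome n) := by
  refine (not_mem_interp_missesSome n).2 fun i hi =>
    ⟨some ⟨i + 1, by omega⟩, ⟨rfl, Option.some_ne_none _⟩, fun h => ?_, ?_, fun j hj h => ?_⟩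
  · simpa using (onePosStar_val_some _ _).1 h
  · exact (onePosStar_val_some _ _).2 (by simp)
  · have := (onePosStar_val_some _ _).1 h
    simp at this
    omega

end Model

/-- for `d ≥ 3`, ML lacks the Craig interpolation property over `T^d`;
in particular over `T^3`, `φ ⊨ ¬φ'` but no ML-formula over `{a}` separates `φ` from `φ'`. -/
theorem stmt_10 :
    (∀ d, 3 ≤ d → ¬ MLCIP (TreeC d)) ∧
    (∀ M ∈ TreeC 3, M.Sat phiCE → ¬ M.Sat phiCE') ∧
    (¬ ∃ ψ : Form, ψ.IsML ∧ ψ.sig ⊆ {0} ∧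
      (∀ M ∈ TreeC 3, M.Sat phiCE → M.Sat ψ) ∧
      (∀ M ∈ TreeC 3, M.Sat ψ → ¬ M.Sat phiCE')) := by
  refine ⟨?_, fun M hM h => M.not_sat_phiCE'_of_sat_phiCE hM h, ?_⟩
  · intro d hd hCIP
    obtain ⟨n, rfl⟩ : ∃ n, d = n + 1 := ⟨d - 1, by omega⟩
    obtain ⟨ψ, hML, hs, hl, hr⟩ := hCIP phiCE (.missesSome n)
      ⟨⟨trivial, trivial⟩, trivial, trivial⟩ (Form.isML_missesSome n)
      fun M hM h => Model.sat_missesSome_of_sat_phiCE hM h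
    have hs0 : ψ.sig ⊆ {0} := by
      intro p hp
      obtain ⟨hp, hp'⟩ := hs hp
      have hp1 : p ≠ 1 := by
        rintro rfl
        exact Form.one_notMem_sig_missesSome n hp'
      simpa [phiCE, Form.sig, hp1] using hp
    refine Model.not_onePosStar_sat_missesSome n (hr _ (Model.star_mem_treeC le_rfl _) ?_)
    exact (Model.twoPosStar_sat_iff hd hML hs0).1
      (hl _ (Model.star_mem_treeC hd _) Model.twoPosStar_sat_phiCE)
  · rintro ⟨ψ, hML, hs, hl, hr⟩
    refine hr _ (Model.star_mem_treeC le_rfl _) ?_ Model.onePosStar_sat_phiCE'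
    exact (Model.twoPosStar_sat_iff le_rfl hML hs).1
      (hl _ (Model.star_mem_treeC le_rfl _) Model.twoPosStar_sat_phiCE)
end

section
/- For every nondeterministic parity tree automaton A over T^d, there exists a nondeterministic parity tree automaton B over T^d, computable in time exponential in |A| (in particular with at most exponentially many states), such that L(B) = Quot(L(A)), where Quot(L) = { M ∈ T^d : there exist N ∈ L and a functional bisimulation Z : N → M }. -/
/-- (Unbounded) `σ`-bisimulations between trees: they link the roots, relate only points of
equal depth, and satisfy the base (w.r.t. `σ`), forth and back conditions. -/
structure IsSigBisim (M M' : Model) (σ : Set ℕ) (Z : M.W → M'.W → Prop) : Prop where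
  root : Z M.root M'.root
  depthEq : ∀ ⦃w w'⦄, Z w w' → ∃ k, M.stepsTo k w ∧ M'.stepsTo k w'
  base : ∀ ⦃w w'⦄, Z w w' → ∀ p ∈ σ, (M.val w p ↔ M'.val w' p)
  forth : ∀ ⦃w w'⦄, Z w w' → ∀ v, M.R w v → ∃ v', M'.R w' v' ∧ Z v v'
  back : ∀ ⦃w w'⦄, Z w w' → ∀ v', M'.R w' v' → ∃ v, M.R w v ∧ Z v v'

/-- Nondeterministic parity tree automata (NPTA) with alphabet `2^σ`. -/
structure NPTA (σ : Set ℕ) : Type 1 where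
  Q : Type
  fin : Fintype Q
  qI : Q
  δ : Q → Set ℕ → Set (List Q)
  rank : Q → ℕ

/-- The number of states of an automaton. -/
def NPTA.card {σ : Set ℕ} (A : NPTA σ) : ℕ := @Fintype.card A.Q A.fin

/-- A run of `A` on `M`: the root gets the initial state, and at every point the
tuple of states of the children is a legal transition for the point's `σ`-letter. -/
def IsRun {σ : Set ℕ} (A : NPTA σ) (M : Model) (ρ : M.W → A.Q) : Prop :=
  ρ M.root = A.qI ∧
  ∀ w : M.W, ∃ l : List M.W, l.Nodup ∧ (∀ v, v ∈ l ↔ M.R w v) ∧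
    l.map ρ ∈ A.δ (ρ w) (σ ∩ {p | M.val w p})

/-- The parity condition: the largest priority occurring infinitely often is even. -/
def ParityGood (r : ℕ → ℕ) : Prop :=
  ∃ m, Even m ∧ (∀ N, ∃ i, N ≤ i ∧ r i = m) ∧ (∀ k, m < k → ∃ N, ∀ i, N ≤ i → r i ≠ k)

/-- Accepting runs: every infinite path satisfies the parity condition. -/
def IsAccRun {σ : Set ℕ} (A : NPTA σ) (M : Model) (ρ : M.W → A.Q) : Prop :=
  IsRun A M ρ ∧
  ∀ π : ℕ → M.W, (∀ i, M.R (π i) (π (i+1))) → ParityGood fun i => A.rank (ρ (π i))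

/-- `M ⊨ A`: `A` has an accepting run on `M`. -/
def SatA {σ : Set ℕ} (M : Model) (A : NPTA σ) : Prop := ∃ ρ, IsAccRun A M ρ


/-! ### Sequences and parity -/

/-- A bounded sequence of naturals has a largest value attained infinitely often. -/
theorem exists_largest_recurrent {r : ℕ → ℕ} {b : ℕ} (hb : ∀ i, r i ≤ b) :
    ∃ m, (∀ n, ∃ i, n ≤ i ∧ r i = m) ∧ ∃ n, ∀ i, n ≤ i → r i ≤ m := by
  classical
  have hex : ∃ m, ∃ n, ∀ i, n ≤ i → r i ≤ m := ⟨b, 0, fun i _ => hb i⟩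
  obtain ⟨n₀, hn₀⟩ := Nat.find_spec hex
  refine ⟨Nat.find hex, fun n => ?_, n₀, hn₀⟩
  by_contra! hcon
  have hlt : ∀ i, max n n₀ ≤ i → r i < Nat.find hex := fun i hi =>
    lt_of_le_of_ne (hn₀ i (le_of_max_le_right hi)) (hcon i (le_of_max_le_left hi))
  have hpos : 0 < Nat.find hex := (Nat.zero_le _).trans_lt (hlt _ le_rfl)
  refine Nat.find_min hex (Nat.sub_lt hpos one_pos) ⟨max n n₀, fun i hi => ?_⟩
  have := hlt i hi
  omega

/-- A parity-good sequence has no odd value that recurs while bounding almost all values. -/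
theorem ParityGood.not_odd_largest {r : ℕ → ℕ} (h : ParityGood r) {k : ℕ}
    (hfreq : ∀ n, ∃ i, n ≤ i ∧ r i = k) {n : ℕ} (hle : ∀ i, n ≤ i → r i ≤ k) : ¬ Odd k := by
  intro hodd
  obtain ⟨m, hm, hmf, hmlt⟩ := h
  rcases lt_trichotomy m k with hlt | rfl | hlt
  · obtain ⟨N, hN⟩ := hmlt k hlt
    obtain ⟨i, hi, hik⟩ := hfreq N
    exact hN i hi hik
  · exact (Nat.not_even_iff_odd.2 hodd) hm
  · obtain ⟨i, hi, hik⟩ := hmf n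
    have := hle i hi
    omega

/-- A bounded sequence that is not parity good has an odd largest recurrent value. -/
theorem exists_odd_largest_of_not_parityGood {r : ℕ → ℕ} {b : ℕ} (hb : ∀ i, r i ≤ b)
    (h : ¬ ParityGood r) :
    ∃ m, Odd m ∧ (∀ n, ∃ i, n ≤ i ∧ r i = m) ∧ ∃ n, ∀ i, n ≤ i → r i ≤ m := by
  obtain ⟨m, hfreq, n, hn⟩ := exists_largest_recurrent hb
  refine ⟨m, ?_, hfreq, n, hn⟩
  by_contra hodd
  refine h ⟨m, Nat.not_odd_iff_even.1 hodd, hfreq, fun k hk => ⟨n, fun i hi => ?_⟩⟩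
  have := hn i hi
  omega

/-- A sequence in a well-founded order that is nonincreasing from some point on cannot drop
infinitely often. -/
theorem not_frequently_drop {L : Type*} [LinearOrder L] [WellFoundedLT L] {x : ℕ → L} {n : ℕ}
    (hx : ∀ t, n ≤ t → x (t + 1) ≤ x t) (hdrop : ∀ s, ∃ t, s ≤ t ∧ x (t + 1) < x t) : False := by
  obtain ⟨y, ⟨t, ht, rfl⟩, hmin⟩ := WellFounded.has_min (wellFounded_lt (α := L))
    (x '' {t | n ≤ t}) ⟨x n, n, le_refl n, rfl⟩
  have hanti : ∀ s, t ≤ s → x s ≤ x t := by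
    intro s hs
    induction s, hs using Nat.le_induction with
    | base => exact le_rfl
    | succ s hs ih => exact (hx s (le_trans ht hs)).trans ih
  obtain ⟨s, hs, hlt⟩ := hdrop t
  exact hmin _ ⟨s + 1, (le_trans ht hs).trans (Nat.le_succ s), rfl⟩ (hlt.trans_le (hanti s hs))

/-- A nonincreasing sequence of naturals is eventually constant. -/
theorem eventually_const_of_nonincreasing {x : ℕ → ℕ} {n : ℕ}
    (hx : ∀ t, n ≤ t → x (t + 1) ≤ x t) : ∃ e s, n ≤ s ∧ ∀ t, s ≤ t → x t = e := by
  by_contra! hcon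
  refine not_frequently_drop hx fun s => ?_
  by_contra! hs
  obtain ⟨t, ht, hne⟩ := hcon (x (max n s)) (max n s) (le_max_left _ _)
  refine hne ?_
  induction t, ht using Nat.le_induction with
  | base => rfl
  | succ t ht ih =>
    have h₁ := hx t (le_of_max_le_left ht)
    have h₂ := hs t (le_of_max_le_right ht)
    by_cases h : x t = x (max n s)
    · omega
    · exact absurd (ih h) h

/-- Orbits of a sequence of functions started at a given time. -/
theorem exists_orbit {I : Type*} (g : ℕ → I → I) (n : ℕ) (p : I) :
    ∃ o : ℕ → I, o n = p ∧ ∀ t, n ≤ t → o (t + 1) = g t (o t) := by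
  let o : ℕ → I := fun t => Nat.rec p (fun s y => if s < n then p else g s y) t
  have hstep : ∀ t, o (t + 1) = if t < n then p else g t (o t) := fun t => rfl
  refine ⟨o, ?_, fun t ht => ?_⟩
  · cases n with
    | zero => rfl
    | succ n => rw [hstep, if_pos (Nat.lt_succ_self n)]
  · rw [hstep, if_neg (not_lt.2 ht)]

/-! ### Progress measures -/

/-- If no infinite path visits `F` infinitely often, there is an ordinal measure that never
increases along `P` and strictly decreases when leaving `F`. -/
theorem exists_progress_measure {V : Type} (P : V → V → Prop) (F : Set V)
    (h : ∀ π : ℕ → V, (∀ i, P (π i) (π (i + 1))) → ¬ ∀ n, ∃ i, n ≤ i ∧ π i ∈ F) :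
    ∃ x : V → Ordinal.{0}, ∀ a b, P a b → x b ≤ x a ∧ (a ∈ F → x b < x a) := by
  classical
  let lt : V → V → Prop := fun b a =>
    ∃ c c', Relation.ReflTransGen P a c ∧ c ∈ F ∧ P c c' ∧ Relation.ReflTransGen P c' b
  have hext : ∀ a a' b, P a a' → lt b a' → lt b a := by
    rintro a a' b haa' ⟨c, c', h₁, h₂, h₃, h₄⟩
    exact ⟨c, c', Relation.ReflTransGen.head haa' h₁, h₂, h₃, h₄⟩
  have hacc : ∀ a a', P a a' → Acc lt a → Acc lt a' := fun a a' haa' ha =>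
    Acc.intro _ fun b hb => ha.inv (hext a a' b haa' hb)
  have hacc' : ∀ a a', Relation.ReflTransGen P a a' → ¬ Acc lt a' → ¬ Acc lt a := by
    intro a a' haa' ha' ha
    induction haa' with
    | refl => exact ha' ha
    | tail _ hbc ih => exact ih fun hb => ha' (hacc _ _ hbc hb)
  have hwf : WellFounded lt := by
    refine ⟨fun a₀ => ?_⟩
    by_contra ha₀
    let Reach : ℕ → V → Prop := fun n a => Nat.rec (motive := fun _ => V → Prop)
      (fun a => a ∈ F ∧ ∃ b, P a b ∧ ¬ Acc lt b)
      (fun _ X a => ∃ b, P a b ∧ ¬ Acc lt b ∧ X b) n a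
    have hreach : ∀ a, ¬ Acc lt a → ∃ n, Reach n a := by
      intro a ha
      obtain ⟨b, ⟨c, c', h₁, h₂, h₃, h₄⟩, hb⟩ : ∃ b, lt b a ∧ ¬ Acc lt b := by
        by_contra! hcon
        exact ha (Acc.intro _ hcon)
      have hc' : ¬ Acc lt c' := hacc' _ _ h₄ hb
      have hc : ¬ Acc lt c := fun hc => hc' (hacc _ _ h₃ hc)
      clear ha
      induction h₁ using Relation.ReflTransGen.head_induction_on with
      | refl => exact ⟨0, h₂, c', h₃, hc'⟩
      | head hxy hyc ih =>
        obtain ⟨n, hn⟩ := ih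
        exact ⟨n + 1, _, hxy, hacc' _ _ hyc hc, hn⟩
    let dist : {a // ¬ Acc lt a} → ℕ := fun a => Nat.find (hreach a.1 a.2)
    have hnext : ∀ a : {a // ¬ Acc lt a}, ∃ b : {a // ¬ Acc lt a},
        P a.1 b.1 ∧ (a.1 ∈ F ∨ dist b < dist a) := by
      intro a
      have hspec : Reach (dist a) a.1 := Nat.find_spec (hreach a.1 a.2)
      rcases hd : dist a with _ | n
      · rw [hd] at hspec
        obtain ⟨hF, b, hab, hb⟩ := hspec
        exact ⟨⟨b, hb⟩, hab, Or.inl hF⟩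
      · rw [hd] at hspec
        obtain ⟨b, hab, hb, hbn⟩ := hspec
        exact ⟨⟨b, hb⟩, hab, Or.inr (Nat.lt_succ_of_le (Nat.find_min' (hreach b hb) hbn))⟩
    choose next hP hF using hnext
    let π : ℕ → {a // ¬ Acc lt a} := fun t => next^[t] ⟨a₀, ha₀⟩
    have hπ : ∀ t, π (t + 1) = next (π t) := fun t => Function.iterate_succ_apply' _ _ _
    refine h (fun t => (π t).1) (fun t => by rw [hπ]; exact hP _) fun n => ?_
    by_contra! hcon
    have hlt : ∀ t, n ≤ t → dist (π (t + 1)) < dist (π t) := fun t ht => by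
      rw [hπ]
      exact (hF (π t)).resolve_left (hcon t ht)
    exact not_frequently_drop (x := fun t => dist (π t)) (fun t ht => (hlt t ht).le)
      fun s => ⟨max n s, le_max_right _ _, hlt _ (le_max_left _ _)⟩
  have : IsWellFounded V lt := ⟨hwf⟩
  refine ⟨IsWellFounded.rank lt, fun a b hab => ⟨?_, fun ha => ?_⟩⟩
  · rw [IsWellFounded.rank_eq lt b]
    refine Ordinal.iSup_le fun c => Order.succ_le_of_lt ?_
    exact IsWellFounded.rank_lt_of_rel (hext a b c.1 hab c.2)
  · exact IsWellFounded.rank_lt_of_rel (r := lt) ⟨a, b, .refl, ha, hab, .refl⟩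

/-! ### Tracking traces by preorders and age records -/

/-- The objects tracked along a branch: a bottom element, and pairs of a state and a state
whose rank serves as the priority under scrutiny. -/
abbrev Tracked (Q : Type) : Type := Option (Q × Q)

/-- One step of the tracking of traces: `le` and `le'` compare the progress measures at a point
and at a child of it, `E` is the trace relation between the two points, `g` sends every tracked
object to the largest one below it at the child, and `D` collects the objects whose measure
strictly decreases in this way. -/
structure OrderStep {Q : Type} (rank : Q → ℕ) (E : Q → Q → Prop) (g : Tracked Q → Tracked Q)
    (D : Set (Tracked Q)) (le le' : Set (Tracked Q × Tracked Q)) : Prop where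
  refl : ∀ p, (p, p) ∈ le
  strict : ∀ p p₁, p ∉ D → (p, p₁) ∉ le → (g p, g p₁) ∉ le'
  edge : ∀ p q q' k, E q q' → rank q ≤ rank k → (some (q, k), p) ∈ le →
    (some (q', k), g p) ∈ le'
  edge_odd : ∀ p q q' k, E q q' → rank q = rank k → Odd (rank k) → p ∉ D →
    (some (q, k), p) ∈ le → (g p, some (q', k)) ∉ le'
  edge_strict : ∀ p q q' k, E q q' → rank q ≤ rank k → p ∉ D → (p, some (q, k)) ∉ le →
    (g p, some (q', k)) ∉ le'

/-- One step of the age record: ages never increase along `g`, and if an age is vacated then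
all later ages are shifted. -/
structure AgeStep {I : Type} {N : ℕ} (g : I → I) (a a' : I → Fin N) : Prop where
  inj : Function.Injective a
  le : ∀ p, a' (g p) ≤ a p
  shift : ∀ p₀ p, a' (g p₀) < a p₀ → a p₀ ≤ a p → a' (g p) < a p

open Classical in
/-- The priority of the event of a single object in a step: even if its age is vacated, odd if
it keeps its age but its measure decreases; older objects have larger priorities. -/
noncomputable def eventPriority {I : Type} {N : ℕ} (g : I → I) (D : Set I) (a a' : I → Fin N)
    (p : I) : ℕ :=
  if a' (g p) < a p then 2 * (N - a p) else if p ∈ D then 2 * (N - a p) - 1 else 0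

/-- The priority of a step: the largest priority of its events. -/
noncomputable def stepPriority {I : Type} [Fintype I] {N : ℕ} (g : I → I) (D : Set I)
    (a a' : I → Fin N) : ℕ :=
  Finset.univ.sup (eventPriority g D a a')

section Record

variable {I : Type} {N : ℕ}

theorem eventPriority_le (g : I → I) (D : Set I) (a a' : I → Fin N) (p : I) :
    eventPriority g D a a' p ≤ 2 * N := by
  unfold eventPriority
  split_ifs <;> omega

theorem stepPriority_le [Fintype I] (g : I → I) (D : Set I) (a a' : I → Fin N) :
    stepPriority g D a a' ≤ 2 * N :=
  Finset.sup_le fun p _ => eventPriority_le g D a a' p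

theorem eventPriority_le_stepPriority [Fintype I] (g : I → I) (D : Set I) (a a' : I → Fin N)
    (p : I) : eventPriority g D a a' p ≤ stepPriority g D a a' :=
  Finset.le_sup (f := eventPriority g D a a') (Finset.mem_univ p)

theorem exists_eventPriority_eq [Fintype I] {g : I → I} {D : Set I} {a a' : I → Fin N}
    (h : 0 < stepPriority g D a a') : ∃ p, eventPriority g D a a' p = stepPriority g D a a' := by
  have hne : (Finset.univ : Finset I).Nonempty := by
    by_contra hne
    rw [Finset.not_nonempty_iff_eq_empty] at hne
    simp [stepPriority, hne] at h
  obtain ⟨p, -, hp⟩ := Finset.exists_mem_eq_sup _ hne (eventPriority g D a a')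
  exact ⟨p, hp.symm⟩

/-- If the priorities of the steps are parity good, then no orbit decreases infinitely often. -/
theorem orbit_not_frequently_mem [Fintype I] {g : ℕ → I → I} {D : ℕ → Set I}
    {a : ℕ → I → Fin N} (ha : ∀ t, AgeStep (g t) (a t) (a (t + 1))) {c : ℕ → ℕ}
    (hc : ∀ t, c (t + 1) = stepPriority (g t) (D t) (a t) (a (t + 1))) (hgood : ParityGood c)
    {o : ℕ → I} {n : ℕ} (ho : ∀ t, n ≤ t → o (t + 1) = g t (o t)) :
    ¬ ∀ s, ∃ t, s ≤ t ∧ o t ∈ D t := by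
  intro hD
  obtain ⟨e, s, hns, hs⟩ := eventually_const_of_nonincreasing
    (x := fun t => (a t (o t) : ℕ)) (n := n) fun t ht => by
      rw [ho t ht]
      exact (ha t).le _
  have hage : ∀ t, s ≤ t → (a (t + 1) (g t (o t)) : ℕ) = e ∧ (a t (o t) : ℕ) = e := by
    intro t ht
    rw [← ho t (hns.trans ht)]
    exact ⟨hs _ (ht.trans (Nat.le_succ t)), hs t ht⟩
  have heN : e < N := by
    rw [← hs s le_rfl]
    exact (a s (o s)).2
  obtain ⟨m, hm, hmf, hmlt⟩ := hgood
  have hbound : 2 * (N - e) - 1 ≤ m := by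
    by_contra! hlt
    choose K hK using hmlt
    let T := (Finset.range (2 * N + 1)).sup fun k => if h : m < k then K k h else 0
    obtain ⟨t, ht, htD⟩ := hD (max s T)
    have hev : 2 * (N - e) - 1 ≤ c (t + 1) := by
      rw [hc]
      refine le_trans ?_ (eventPriority_le_stepPriority _ _ _ _ (o t))
      obtain ⟨h₁, h₂⟩ := hage t (le_of_max_le_left ht)
      have : ¬ a (t + 1) (g t (o t)) < a t (o t) := by
        rw [Fin.lt_def]
        omega
      rw [eventPriority, if_neg this, if_pos htD, h₂]
    have hmc : m < c (t + 1) := hlt.trans_le hev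
    have hmem : c (t + 1) ∈ Finset.range (2 * N + 1) := by
      rw [Finset.mem_range, hc]
      exact Nat.lt_succ_of_le (stepPriority_le _ _ _ _)
    have hKT : K (c (t + 1)) hmc ≤ T := by
      have := Finset.le_sup (f := fun k => if h : m < k then K k h else 0) hmem
      rwa [dif_pos hmc] at this
    exact hK _ hmc (t + 1) (hKT.trans ((le_of_max_le_right ht).trans (Nat.le_succ t))) rfl
  obtain ⟨i, hi, him⟩ := hmf (s + 1)
  obtain ⟨t, rfl⟩ : ∃ t, i = t + 1 := ⟨i - 1, by omega⟩
  have hst : s ≤ t := by omega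
  obtain ⟨j, hj⟩ := hm
  rw [hc] at him
  obtain ⟨p, hp⟩ := exists_eventPriority_eq (g := g t) (D := D t) (a := a t) (a' := a (t + 1))
    (by omega)
  have hpN := (a t p).2
  obtain ⟨h₁, h₂⟩ := hage t hst
  rw [him, eventPriority] at hp
  split_ifs at hp with hlt hpD
  · have hshift := (ha t).shift p (o t) hlt (by rw [Fin.le_def]; omega)
    rw [Fin.lt_def] at hshift
    omega
  · omega
  · omega

/-- If measures never increase along `g` and strictly decrease on `D`, then the priorities of the
steps are parity good. -/
theorem parityGood_stepPriority [Fintype I] {L : Type*} [LinearOrder L] [WellFoundedLT L]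
    {g : ℕ → I → I} {D : ℕ → Set I} {a : ℕ → I → Fin N}
    (ha : ∀ t, AgeStep (g t) (a t) (a (t + 1))) {c : ℕ → ℕ} (hc₀ : c 0 ≤ 2 * N)
    (hc : ∀ t, c (t + 1) = stepPriority (g t) (D t) (a t) (a (t + 1)))
    {x : ℕ → I → L} (hx : ∀ t p, x (t + 1) (g t p) ≤ x t p)
    (hxD : ∀ t, ∀ p ∈ D t, x (t + 1) (g t p) < x t p) : ParityGood c := by
  by_contra hbad
  obtain ⟨m, ⟨j, hj⟩, hmf, T, hT⟩ := exists_odd_largest_of_not_parityGood (b := 2 * N)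
    (fun i => by
      cases i with
      | zero => exact hc₀
      | succ t => rw [hc]; exact stepPriority_le _ _ _ _) hbad
  have hfreq : ∀ n, ∃ t, n ≤ t ∧ ∃ p ∈ D t, 2 * (N - (a t p : ℕ)) - 1 = m := by
    intro n
    obtain ⟨i, hi, him⟩ := hmf (n + 1)
    obtain ⟨t, rfl⟩ : ∃ t, i = t + 1 := ⟨i - 1, by omega⟩
    rw [hc] at him
    obtain ⟨p, hp⟩ := exists_eventPriority_eq (g := g t) (D := D t) (a := a t)
      (a' := a (t + 1)) (by omega)
    rw [him, eventPriority] at hp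
    split_ifs at hp with hlt hpD
    · omega
    · exact ⟨t, by omega, p, hpD, hp⟩
    · omega
  obtain ⟨s, hTs, p₀, -, hp₀⟩ := hfreq T
  obtain ⟨o, hos, ho⟩ := exists_orbit g s p₀
  have hage : ∀ t, s ≤ t → (a t (o t) : ℕ) = a s p₀ := by
    intro t ht
    induction t, ht using Nat.le_induction with
    | base => rw [hos]
    | succ t ht ih =>
      rw [ho t ht, ← ih]
      refine le_antisymm ((ha t).le _) ?_
      by_contra! hlt
      have h₁ := eventPriority_le_stepPriority (g t) (D t) (a t) (a (t + 1)) (o t)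
      have h₂ := hT (t + 1) (by omega)
      have := (a s p₀).2
      rw [hc] at h₂
      rw [eventPriority, if_pos (Fin.lt_def.2 hlt)] at h₁
      omega
  refine not_frequently_drop (x := fun t => x t (o t)) (n := s) (fun t ht => ?_) fun n => ?_
  · rw [ho t ht]
    exact hx t _
  · obtain ⟨t, ht, p, hpD, hp⟩ := hfreq (max n s)
    have hst := le_of_max_le_right ht
    have : p = o t := (ha t).inj (Fin.ext (by
      have := hage t hst
      have := (a s p₀).2
      have := (a t p).2
      omega))
    refine ⟨t, le_of_max_le_left ht, ?_⟩
    rw [ho t hst, ← this]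
    exact hxD t p hpD

/-- Every age record can be updated. -/
theorem exists_ageStep [Fintype I] (g : I → I) {a : I → Fin (Fintype.card I)}
    (ha : Function.Injective a) :
    ∃ a' : I → Fin (Fintype.card I), Function.Injective a' ∧ AgeStep g a a' := by
  classical
  obtain ⟨m, hmle, hmatt, hmout⟩ : ∃ m : I → ℕ, (∀ p, m (g p) ≤ a p) ∧
      (∀ p, ∃ p₁, g p₁ = g p ∧ m (g p) = a p₁) ∧
      ∀ p', p' ∉ Set.range g → m p' = Fintype.card I + a p' := by
    let m : I → ℕ := fun p' => if h : ∃ n, ∃ p, g p = p' ∧ (a p : ℕ) = n then Nat.find h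
      else Fintype.card I + a p'
    have hex : ∀ p, ∃ n, ∃ p₁, g p₁ = g p ∧ (a p₁ : ℕ) = n := fun p => ⟨a p, p, rfl, rfl⟩
    have hm : ∀ p, m (g p) = Nat.find (hex p) := fun p => dif_pos (hex p)
    refine ⟨m, fun p => ?_, fun p => ?_, fun p' hp' => dif_neg ?_⟩
    · rw [hm]
      exact Nat.find_min' _ ⟨p, rfl, rfl⟩
    · obtain ⟨p₁, h₁, h₂⟩ := Nat.find_spec (hex p)
      exact ⟨p₁, h₁, by rw [hm, h₂]⟩
    · rintro ⟨n, p, hp, -⟩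
      exact hp' ⟨p, hp⟩
  have hminj : Function.Injective m := by
    intro p' p₁' heq
    by_cases h : p' ∈ Set.range g <;> by_cases h₁ : p₁' ∈ Set.range g
    · obtain ⟨p, rfl⟩ := h
      obtain ⟨p₁, rfl⟩ := h₁
      obtain ⟨r, hr, hr'⟩ := hmatt p
      obtain ⟨r₁, hr₁, hr₁'⟩ := hmatt p₁
      have : r = r₁ := ha (Fin.ext (by rw [← hr', ← hr₁', heq]))
      rw [← hr, ← hr₁, this]
    · obtain ⟨p, rfl⟩ := h
      have := hmle p
      have := (a p).2
      have := hmout _ h₁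
      omega
    · obtain ⟨p, rfl⟩ := h₁
      have := hmle p
      have := (a p).2
      have := hmout _ h
      omega
    · have h₂ := hmout _ h
      have h₃ := hmout _ h₁
      exact ha (Fin.ext (by omega))
  let below : I → Finset I := fun p' => {r | m r < m p'}
  have hmem : ∀ r p', r ∈ below p' ↔ m r < m p' := fun r p' => by simp [below]
  have hlt : ∀ p', (below p').card < Fintype.card I := fun p' =>
    Finset.card_lt_univ_of_notMem (x := p') (by simp [hmem])
  have hmono : ∀ r p', m r < m p' → (below r).card < (below p').card := fun r p' h =>
    Finset.card_lt_card (Finset.ssubset_iff_of_subset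
      (fun z hz => (hmem _ _).2 (((hmem _ _).1 hz).trans h)) |>.2
      ⟨r, (hmem _ _).2 h, by simp [hmem]⟩)
  have himage : ∀ p', (below p').image m ⊆ Finset.range (m p') := fun p' n hn => by
    obtain ⟨r, hr, rfl⟩ := Finset.mem_image.1 hn
    exact Finset.mem_range.2 ((hmem _ _).1 hr)
  have hcard : ∀ p', ((below p').image m).card = (below p').card := fun p' =>
    Finset.card_image_of_injective _ hminj
  have hle : ∀ p', (below p').card ≤ m p' := fun p' => by
    rw [← hcard]
    simpa using Finset.card_le_card (himage p')
  have hfull : ∀ p', (below p').card = m p' → ∀ n < m p', ∃ r, m r = n := by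
    intro p' h n hn
    have heq := Finset.eq_of_subset_of_card_le (himage p') (by simp [hcard, h])
    rw [← Finset.mem_range, ← heq] at hn
    obtain ⟨r, -, hr⟩ := Finset.mem_image.1 hn
    exact ⟨r, hr⟩
  refine ⟨fun p' => ⟨(below p').card, hlt p'⟩, fun p' p₁' h => hminj ?_, ha,
    fun p => (hle _).trans (hmle p), fun p₀ p h₀ hp => ?_⟩
  · have h' : (below p').card = (below p₁').card := congrArg Fin.val h
    rcases lt_trichotomy (m p') (m p₁') with h₁ | h₁ | h₁
    · exact absurd h' (hmono _ _ h₁).ne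
    · exact h₁
    · exact absurd h' (hmono _ _ h₁).ne'
  · rw [Fin.lt_def] at h₀ ⊢
    rw [Fin.le_def] at hp
    dsimp only at h₀ ⊢
    by_contra! hge
    have h₁ := hle (g p)
    have h₂ := hmle p
    have hlow : ∀ n ≤ (a p : ℕ), ∃ r, m r = n := by
      intro n hn
      rcases hn.lt_or_eq with hn | rfl
      · exact hfull (g p) (by omega) n (by omega)
      · exact ⟨g p, by omega⟩
    obtain ⟨r, hr⟩ := hlow (a p₀) hp
    have hr₀ : r = g p₀ := by
      by_cases h : r ∈ Set.range g
      · obtain ⟨p₁, rfl⟩ := h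
        obtain ⟨p₂, h₂, h₃⟩ := hmatt p₁
        rw [← h₂, ha (Fin.ext (h₃.symm.trans hr))]
      · have := hmout r h
        have := (a p₀).2
        omega
    have hrange : Finset.range (m (g p₀)) ⊆ (below (g p₀)).image m := by
      intro n hn
      rw [Finset.mem_range] at hn
      obtain ⟨z, rfl⟩ := hlow n (by rw [← hr₀, hr] at hn; omega)
      exact Finset.mem_image_of_mem _ ((hmem _ _).2 hn)
    have := Finset.card_le_card hrange
    rw [hcard, Finset.card_range, ← hr₀, hr] at this
    rw [← hr₀] at h₀
    omega

end Record

/-- Traces along a branch are parity good if the tracking record of the branch is. -/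
theorem parityGood_trace {Q : Type} [Fintype Q] {N : ℕ} {rank : Q → ℕ} {E : ℕ → Q → Q → Prop}
    {g : ℕ → Tracked Q → Tracked Q} {D : ℕ → Set (Tracked Q)}
    {le : ℕ → Set (Tracked Q × Tracked Q)} {a : ℕ → Tracked Q → Fin N} {c : ℕ → ℕ}
    (hle : ∀ t, OrderStep rank (E t) (g t) (D t) (le t) (le (t + 1)))
    (ha : ∀ t, AgeStep (g t) (a t) (a (t + 1)))
    (hc : ∀ t, c (t + 1) = stepPriority (g t) (D t) (a t) (a (t + 1))) (hgood : ParityGood c)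
    {q : ℕ → Q} (hq : ∀ t, E t (q t) (q (t + 1))) : ParityGood fun t => rank (q t) := by
  by_contra hbad
  obtain ⟨m, hodd, hmf, T, hT⟩ := exists_odd_largest_of_not_parityGood
    (b := Finset.univ.sup rank) (fun t => Finset.le_sup (Finset.mem_univ (q t))) hbad
  obtain ⟨i₀, -, hi₀⟩ := hmf 0
  obtain ⟨k, rfl⟩ : ∃ k, rank k = m := ⟨_, hi₀⟩
  choose o ho₀ ho using fun j => exists_orbit g j (some (q j, k))
  have hlim : ∀ j, ∃ e s, j ≤ s ∧ ∀ t, s ≤ t → (a t (o j t) : ℕ) = e := fun j =>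
    eventually_const_of_nonincreasing fun t ht => by
      rw [ho j t ht]
      exact (ha t).le _
  choose e s hjs hs using hlim
  have heN : ∀ j, e j < N := fun j => by
    rw [← hs j (s j) le_rfl]
    exact (a _ _).2
  obtain ⟨e₀, he₀⟩ := Finite.exists_infinite_fiber fun j => (⟨e j, heN j⟩ : Fin N)
  have hfib := Set.infinite_coe_iff.1 he₀
  obtain ⟨J, hJ, hTJ⟩ := hfib.exists_gt T
  refine orbit_not_frequently_mem ha hc hgood (ho J) fun n => ?_
  by_contra! hD
  have hbelow : ∀ t, J ≤ t → (some (q t, k), o J t) ∈ le t := by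
    intro t ht
    induction t, ht using Nat.le_induction with
    | base =>
      rw [ho₀]
      exact (hle J).refl _
    | succ t ht ih =>
      rw [ho J t ht]
      exact (hle t).edge _ _ _ _ (hq t) (hT t (by omega)) ih
  obtain ⟨j, hj, hjk⟩ := hmf (max n J)
  have hnj := le_of_max_le_left hj
  have hJj := le_of_max_le_right hj
  have hstrict : ∀ t, j + 1 ≤ t → (o J t, some (q t, k)) ∉ le t := by
    intro t ht
    induction t, ht using Nat.le_induction with
    | base =>
      rw [ho J j hJj]
      exact (hle j).edge_odd _ _ _ _ (hq j) hjk hodd (hD j hnj) (hbelow j hJj)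
    | succ t ht ih =>
      rw [ho J t (by omega)]
      exact (hle t).edge_strict _ _ _ _ (hq t) (hT t (by omega)) (hD t (by omega)) ih
  obtain ⟨j', hj', hjj'⟩ := hfib.exists_gt (j + 1)
  have hsep : ∀ t, j' ≤ t → (o J t, o j' t) ∉ le t := by
    intro t ht
    induction t, ht using Nat.le_induction with
    | base =>
      rw [ho₀ j']
      exact hstrict j' hjj'.le
    | succ t ht ih =>
      rw [ho J t (by omega), ho j' t ht]
      exact (hle t).strict _ _ (hD t (by omega)) ih
  have hmerge : o J (max (s J) (s j')) = o j' (max (s J) (s j')) := by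
    refine (ha (max (s J) (s j'))).inj (Fin.ext ?_)
    rw [hs J _ (le_max_left _ _), hs j' _ (le_max_right _ _)]
    exact congrArg Fin.val (hJ.trans hj'.symm)
  refine hsep (max (s J) (s j')) ((hjs j').trans (le_max_right _ _)) ?_
  rw [hmerge]
  exact (hle _).refl _

/-! ### The quotient automaton -/

instance {σ : Set ℕ} (A : NPTA σ) : Fintype A.Q := A.fin

/-- States of the quotient automaton: the set of states of the given automaton at a point of the
quotient, the comparison of their progress measures, an age record, and a priority. -/
@[ext]
structure QuotState (Q : Type) [Fintype Q] : Type where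
  support : Set Q
  le : Set (Tracked Q × Tracked Q)
  age : Tracked Q → Fin (Fintype.card (Tracked Q))
  prio : Fin (2 * Fintype.card (Tracked Q) + 1)

namespace QuotState

variable {Q : Type} [Fintype Q]

/-- The components of a state as a tuple. -/
def toProd (b : QuotState Q) : Set Q × Set (Tracked Q × Tracked Q) ×
    (Tracked Q → Fin (Fintype.card (Tracked Q))) × Fin (2 * Fintype.card (Tracked Q) + 1) :=
  (b.support, b.le, b.age, b.prio)

theorem toProd_injective : Function.Injective (toProd (Q := Q)) := by
  intro b b' h
  simp only [toProd, Prod.mk.injEq] at h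
  exact QuotState.ext h.1 h.2.1 h.2.2.1 h.2.2.2

noncomputable instance : Fintype (QuotState Q) := by
  classical exact Fintype.ofInjective toProd toProd_injective

theorem card_le : Fintype.card (QuotState Q) ≤ 2 ^ ((Fintype.card Q + 2) ^ 8) := by
  classical
  refine (Fintype.card_le_of_injective _ toProd_injective).trans ?_
  simp only [Fintype.card_prod, Fintype.card_set, Fintype.card_fun, Fintype.card_fin,
    Fintype.card_option]
  set n := Fintype.card Q
  set N := n * n + 1 with hN
  calc 2 ^ n * (2 ^ (N * N) * (N ^ N * (2 * N + 1)))
      ≤ 2 ^ n * (2 ^ (N * N) * ((2 ^ N) ^ N * 2 ^ (2 * N + 1))) := by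
        gcongr
        · exact Nat.lt_two_pow_self.le
        · exact Nat.lt_two_pow_self.le
    _ = 2 ^ (n + (N * N + (N * N + (2 * N + 1)))) := by
        rw [← pow_mul, ← pow_add, ← pow_add, ← pow_add]
    _ ≤ 2 ^ ((n + 2) ^ 8) := by
        refine Nat.pow_le_pow_right two_pos ?_
        obtain ⟨s, hs⟩ : ∃ s, s = (n + 2) ^ 2 := ⟨_, rfl⟩
        have hpow : (n + 2) ^ 8 = s ^ 4 := by rw [hs, ← pow_mul]
        have hs4 : 4 ≤ s := by rw [hs]; nlinarith
        have hns : n ≤ s := by rw [hs]; nlinarith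
        have hNs : N ≤ s := by rw [hs, hN]; nlinarith
        have hNN : N * N ≤ s * s := Nat.mul_le_mul hNs hNs
        have hss : 16 * (s * s) ≤ s ^ 4 := by
          have : 16 ≤ s * s := Nat.mul_le_mul hs4 hs4
          calc 16 * (s * s) ≤ (s * s) * (s * s) := Nat.mul_le_mul_right _ this
            _ = s ^ 4 := by ring
        rw [hpow]
        nlinarith

end QuotState

/-- Transitions of the quotient automaton: for every state `q` at the current point there is a
transition of the given automaton, listed by `P q` together with a surjective assignment of its
entries to the children of the point; the induced traces are tracked correctly. -/
def IsQuotTransition {σ : Set ℕ} (A : NPTA σ) (b : QuotState A.Q) (ch : Set ℕ)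
    (L : List (QuotState A.Q)) : Prop :=
  ∃ P : A.Q → List (A.Q × ℕ),
    (∀ q ∈ b.support, (P q).map Prod.fst ∈ A.δ q ch ∧
      (∀ x ∈ P q, ∃ c, L[x.2]? = some c ∧ x.1 ∈ c.support) ∧
      ∀ i < L.length, ∃ q', (q', i) ∈ P q) ∧
    ∀ i c, L[i]? = some c → ∃ g D,
      OrderStep A.rank (fun q q' => q ∈ b.support ∧ (q', i) ∈ P q) g D b.le c.le ∧
      AgeStep g b.age c.age ∧ (c.prio : ℕ) = stepPriority g D b.age c.age

/-- The automaton recognizing the bisimulation quotients of the trees accepted by `A`. -/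
noncomputable def quotAutomaton {σ : Set ℕ} (A : NPTA σ) (d : ℕ) : NPTA σ where
  Q := QuotState A.Q
  fin := inferInstance
  qI := ⟨{A.qI}, Set.univ, Fintype.equivFin _, 0⟩
  δ b ch := {L | L.length ≤ d ∧ IsQuotTransition A b ch L}
  rank b := b.prio

/-! ### Unravelling -/

/-- The vertex reached from `v₀` along a path, given (in reverse) by child indices. -/
def unravelAt {V : Type} (ch : V → List V) (v₀ : V) : List ℕ → Option V
  | [] => some v₀
  | i :: s => (unravelAt ch v₀ s).bind fun v => (ch v)[i]?

/-- The tree of paths through the vertices of a graph with ordered children. -/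
def Unravel {V : Type} (ch : V → List V) (v₀ : V) : Type :=
  {s : List ℕ // (unravelAt ch v₀ s).isSome}

namespace Unravel

variable {V : Type} {ch : V → List V} {v₀ : V}

/-- The endpoint of a path. -/
def label (s : Unravel ch v₀) : V := (unravelAt ch v₀ s.1).get s.2

/-- The empty path. -/
def root : Unravel ch v₀ := ⟨[], rfl⟩

theorem unravelAt_eq (s : Unravel ch v₀) : unravelAt ch v₀ s.1 = some s.label :=
  (Option.some_get s.2).symm

theorem unravelAt_cons (s : Unravel ch v₀) (i : ℕ) :
    unravelAt ch v₀ (i :: s.1) = (ch s.label)[i]? := by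
  rw [unravelAt, unravelAt_eq, Option.bind_some]

/-- Extension of a path to the `i`-th child of its endpoint. -/
def child (s : Unravel ch v₀) (i : Fin (ch s.label).length) : Unravel ch v₀ :=
  ⟨i :: s.1, by rw [unravelAt_cons]; simp⟩

theorem label_child (s : Unravel ch v₀) (i : Fin (ch s.label).length) :
    (s.child i).label = (ch s.label)[i] := by
  have h := (unravelAt_eq (s.child i)).symm.trans (unravelAt_cons s i)
  simpa using h

theorem child_injective (s : Unravel ch v₀) : Function.Injective s.child := by
  intro i j h
  have := congrArg Subtype.val h
  simp only [child, List.cons.injEq] at this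
  exact Fin.ext this.1

/-- The child relation on paths. -/
def Rel (s t : Unravel ch v₀) : Prop := ∃ i, t = s.child i

theorem induction {p : Unravel ch v₀ → Prop} (h₀ : p root)
    (h : ∀ s i, p s → p (s.child i)) (s : Unravel ch v₀) : p s := by
  obtain ⟨l, hl⟩ := s
  induction l with
  | nil => exact h₀
  | cons i l ih =>
    have hl' : (unravelAt ch v₀ l).isSome := by
      by_contra hn
      rw [Option.not_isSome_iff_eq_none] at hn
      simp [unravelAt, hn] at hl
    have hi : i < (ch (label ⟨l, hl'⟩)).length := by
      have := hl
      rw [unravelAt_cons ⟨l, hl'⟩] at this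
      simpa using this
    exact h ⟨l, hl'⟩ ⟨i, hi⟩ (ih hl')

theorem Rel.parent_unique {s s' t : Unravel ch v₀} (h : Rel s t) (h' : Rel s' t) : s = s' := by
  obtain ⟨i, rfl⟩ := h
  obtain ⟨j, hj⟩ := h'
  have := congrArg Subtype.val hj
  simp only [child, List.cons.injEq] at this
  exact Subtype.ext this.2

end Unravel

/-- A graph of pairs of points of `M` and states of `A` that resolves the transitions of `A`
unravels to a tree accepted by `A` with quotient `M`. -/
theorem exists_unravelling {σ : Set ℕ} (A : NPTA σ) {d : ℕ}
    (hA : ∀ q ch l, l ∈ A.δ q ch → l.length ≤ d) (M : Model)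
    (ch : M.W × A.Q → List (M.W × A.Q)) (Good : M.W × A.Q → Prop)
    (hroot : Good (M.root, A.qI))
    (hδ : ∀ v, Good v → (ch v).map Prod.snd ∈ A.δ v.2 (σ ∩ {p | M.val v.1 p}))
    (hforth : ∀ v, Good v → ∀ x ∈ ch v, Good x ∧ M.R v.1 x.1)
    (hback : ∀ v, Good v → ∀ w, M.R v.1 w → ∃ x ∈ ch v, x.1 = w)
    (hacc : ∀ π : ℕ → M.W × A.Q, (∀ t, Good (π t) ∧ π (t + 1) ∈ ch (π t)) →
      ParityGood fun t => A.rank (π t).2) :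
    ∃ N ∈ TreeC d, SatA N A ∧ ∃ f : N.W → M.W, IsSigBisim N M Set.univ fun v w => f v = w := by
  classical
  let N : Model :=
    { W := Unravel ch (M.root, A.qI)
      root := Unravel.root
      R := Unravel.Rel
      val := fun s => M.val s.label.1 }
  have hgood : ∀ s : Unravel ch (M.root, A.qI), Good s.label := by
    intro s
    induction s using Unravel.induction with
    | h₀ => exact hroot
    | h s i ih =>
      rw [Unravel.label_child]
      exact (hforth _ ih _ (List.getElem_mem _)).1
  have hrel : ∀ s t : Unravel ch (M.root, A.qI), s.Rel t → t.label ∈ ch s.label := by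
    rintro s _ ⟨i, rfl⟩
    rw [Unravel.label_child]
    exact List.getElem_mem _
  have hlen : ∀ s : Unravel ch (M.root, A.qI), (ch s.label).length ≤ d := fun s => by
    simpa using hA _ _ _ (hδ _ (hgood s))
  refine ⟨N, ⟨⟨fun s => ?_, ?_, fun t s s' h h' => h.parent_unique h'⟩, ?_⟩,
    ⟨fun s => s.label.2, ⟨rfl, fun s => ?_⟩, fun π hπ => ?_⟩, fun s => s.label.1, ?_⟩
  · induction s using Unravel.induction with
    | h₀ => exact .refl
    | h s i ih => exact .tail ih ⟨i, rfl⟩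
  · rintro s ⟨i, hi⟩
    exact absurd (congrArg Subtype.val hi) (by simp [N, Unravel.root, Unravel.child])
  · rintro s ⟨u, hu, hmem⟩
    choose i hi using hmem
    have hinj : Function.Injective i := fun j j' h => hu (by rw [hi, hi, h])
    have := Fintype.card_le_of_injective i hinj
    have := hlen s
    simp only [Fintype.card_fin] at *
    omega
  · refine ⟨(List.finRange _).map s.child, (List.nodup_finRange _).map s.child_injective,
      fun t => ?_, ?_⟩
    · simp only [List.mem_map, List.mem_finRange, true_and]
      exact exists_congr fun i => eq_comm
    · rw [List.map_map]
      convert hδ _ (hgood s) using 1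
      refine List.ext_getElem (by simp) fun j h₁ h₂ => ?_
      simp [Unravel.label_child]
  · exact hacc (fun t => (π t).label) fun t => ⟨hgood _, hrel _ _ (hπ t)⟩
  · refine ⟨rfl, ?_, ?_, ?_, ?_⟩
    · rintro s _ rfl
      induction s using Unravel.induction with
      | h₀ => exact ⟨0, rfl, rfl⟩
      | h s i ih =>
        obtain ⟨k, h₁, h₂⟩ := ih
        exact ⟨k + 1, ⟨s, h₁, i, rfl⟩, _, h₂,
          (hforth _ (hgood s) _ (hrel s (s.child i) ⟨i, rfl⟩)).2⟩
    · rintro s _ rfl p -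
      exact Iff.rfl
    · rintro s _ rfl t hst
      exact ⟨_, (hforth _ (hgood s) _ (hrel s t hst)).2, rfl⟩
    · rintro s _ rfl w hw
      obtain ⟨x, hx, rfl⟩ := hback _ (hgood s) w hw
      obtain ⟨i, hi, rfl⟩ := List.getElem_of_mem hx
      exact ⟨s.child ⟨i, hi⟩, ⟨_, rfl⟩, congrArg Prod.fst (s.label_child ⟨i, hi⟩)⟩

/-- Trees accepted by the quotient automaton are quotients of trees accepted by `A`. -/
theorem exists_preimage_of_satA_quotAutomaton {σ : Set ℕ} (A : NPTA σ) {d : ℕ}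
    (hA : ∀ q ch l, l ∈ A.δ q ch → l.length ≤ d) (M : Model)
    (h : SatA M (quotAutomaton A d)) :
    ∃ N ∈ TreeC d, SatA N A ∧ ∃ f : N.W → M.W, IsSigBisim N M Set.univ fun v w => f v = w := by
  obtain ⟨ρ, ⟨hρroot, hρ⟩, hacc⟩ :
    ∃ ρ : M.W → QuotState A.Q, IsAccRun (quotAutomaton A d) M ρ := h
  choose l hnodup hmem hl using hρ
  have hl' : ∀ w, IsQuotTransition A (ρ w) (σ ∩ {p | M.val w p}) ((l w).map ρ) :=
    fun w => (hl w).2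
  choose P hP hstep using hl'
  have hget : ∀ (w : M.W) (i : ℕ) (w' : M.W), (l w)[i]? = some w' →
      ((l w).map ρ)[i]? = some (ρ w') := by
    intro w i w' h
    rw [List.getElem?_map, h, Option.map_some]
  let ch : M.W × A.Q → List (M.W × A.Q) := fun v =>
    (P v.1 v.2).map fun x => ((l v.1)[x.2]?.getD v.1, x.1)
  have hch : ∀ v, v.2 ∈ (ρ v.1).support → ∀ x ∈ ch v, ∃ i, (l v.1)[i]? = some x.1 ∧
      (x.2, i) ∈ P v.1 v.2 ∧ x.2 ∈ (ρ x.1).support := by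
    intro v hv x hx
    obtain ⟨⟨q', i⟩, hy, rfl⟩ := List.mem_map.1 hx
    obtain ⟨b', hb', hq'⟩ := (hP v.1 v.2 hv).2.1 _ hy
    rw [List.getElem?_map, Option.map_eq_some_iff] at hb'
    obtain ⟨w', hw', rfl⟩ := hb'
    dsimp only at hw' hq' ⊢
    rw [hw', Option.getD_some]
    exact ⟨i, hw', hy, hq'⟩
  refine exists_unravelling A hA M ch (fun v => v.2 ∈ (ρ v.1).support) ?_ ?_ ?_ ?_ ?_
  · rw [hρroot]
    exact rfl
  · intro v hv
    have := (hP v.1 v.2 hv).1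
    simpa [ch, Function.comp_def] using this
  · intro v hv x hx
    obtain ⟨i, hi, -, hx'⟩ := hch v hv x hx
    exact ⟨hx', (hmem _ _).1 (List.mem_of_getElem? hi)⟩
  · intro v hv w hw
    obtain ⟨i, hi, hiw⟩ := List.getElem_of_mem ((hmem v.1 w).2 hw)
    obtain ⟨q', hq'⟩ := (hP v.1 v.2 hv).2.2 i (by simpa using hi)
    refine ⟨_, List.mem_map_of_mem hq', ?_⟩
    dsimp only
    rw [List.getElem?_eq_getElem hi, Option.getD_some, hiw]
  · intro π hπ
    choose i hi hiP _ using fun t => hch (π t) (hπ t).1 (π (t + 1)) (hπ t).2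
    choose g D hle hage hprio using fun t =>
      hstep (π t).1 (i t) (ρ (π (t + 1)).1) (hget _ _ _ (hi t))
    exact parityGood_trace hle hage (c := fun t => ((ρ (π t).1).prio : ℕ)) hprio
      (hacc (fun t => (π t).1) fun t => (hmem _ _).1 (List.mem_of_getElem? (hi t)))
      (q := fun t => (π t).2) fun t => ⟨(hπ t).1, hiP t⟩

/-! ### Accepting runs on quotients -/

/-- Functions on a tree model can be defined by recursion along the tree. -/
theorem Model.IsTree.exists_recursive {M : Model} (hM : M.IsTree) {α : Type*} (start : α)
    (step : M.W → M.W → α → α) :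
    ∃ x : M.W → α, x M.root = start ∧ ∀ v w, M.R v w → x w = step v w (x v) := by
  classical
  obtain ⟨hreach, hroot, huniq⟩ := hM
  have hwf : WellFounded M.R := by
    refine ⟨fun w => ?_⟩
    induction hreach w with
    | refl => exact Acc.intro _ fun v hv => absurd hv (hroot v)
    | tail _ hvw ih =>
      refine Acc.intro _ fun v' hv' => ?_
      rwa [huniq _ _ _ hv' hvw]
  let F : (w : M.W) → ((v : M.W) → M.R v w → α) → α := fun w ih =>
    if h : ∃ v, M.R v w then step h.choose w (ih h.choose h.choose_spec) else start
  refine ⟨hwf.fix F, ?_, fun v w hvw => ?_⟩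
  · rw [hwf.fix_eq]
    exact dif_neg fun ⟨v, hv⟩ => hroot v hv
  · rw [hwf.fix_eq]
    have h : ∃ v, M.R v w := ⟨v, hvw⟩
    have hv : h.choose = v := huniq _ _ _ h.choose_spec hvw
    refine (dif_pos h).trans ?_
    change step h.choose w (hwf.fix F h.choose) = _
    rw [hv]

/-- The children of a point in a model of bounded outdegree can be listed. -/
theorem Model.outdegLE.exists_children {M : Model} {d : ℕ} (hM : M.outdegLE d) (w : M.W) :
    ∃ l : List M.W, l.Nodup ∧ (∀ v, v ∈ l ↔ M.R w v) ∧ l.length ≤ d := by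
  classical
  have hsub : ∀ t : Finset M.W, (t : Set M.W) ⊆ {v | M.R w v} → t.card ≠ d + 1 := by
    intro t ht hcard
    refine hM w ⟨fun i => (t.equivFinOfCardEq hcard).symm i, ?_, fun i => ht (Subtype.coe_prop _)⟩
    exact Subtype.val_injective.comp (Equiv.injective _)
  have hfin : {v | M.R w v}.Finite := by
    by_contra hinf
    obtain ⟨t, ht, hcard⟩ := Set.Infinite.exists_subset_card_eq hinf (d + 1)
    exact hsub t ht hcard
  refine ⟨hfin.toFinset.toList, Finset.nodup_toList _, fun v => by simp, ?_⟩
  rw [Finset.length_toList]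
  by_contra! hlt
  obtain ⟨t, ht, hcard⟩ := Finset.exists_subset_card_eq (Nat.succ_le_of_lt hlt)
  exact hsub t (fun v hv => by simpa using ht hv) hcard

/-- An accepting run carries lexicographic progress measures `T`; here `tr k` cuts off the
components for priorities below the rank of `k`. -/
theorem exists_signature {σ : Set ℕ} {A : NPTA σ} {N : Model} {ρ : N.W → A.Q}
    (hacc : ∀ π : ℕ → N.W, (∀ i, N.R (π i) (π (i + 1))) → ParityGood fun i => A.rank (ρ (π i))) :
    ∃ (L : Type 1) (_ : LinearOrder L) (_ : WellFoundedLT L) (tr : A.Q → L → L) (T : N.W → L),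
      (∀ k, Monotone (tr k)) ∧ ∀ v v' k, N.R v v' → A.rank (ρ v) ≤ A.rank k →
        tr k (T v') ≤ tr k (T v) ∧
        (A.rank (ρ v) = A.rank k → Odd (A.rank k) → tr k (T v') < tr k (T v)) := by
  classical
  have hmeasure : ∀ m : ℕ, ∃ x : N.W → Ordinal.{0}, ∀ v v', N.R v v' → A.rank (ρ v) ≤ m →
      x v' ≤ x v ∧ (A.rank (ρ v) = m → Odd m → x v' < x v) := by
    intro m
    by_cases hm : Odd m
    · obtain ⟨x, hx⟩ := exists_progress_measure (fun v v' => N.R v v' ∧ A.rank (ρ v) ≤ m)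
        {v | A.rank (ρ v) = m} fun π hπ hfreq =>
          (hacc π fun i => (hπ i).1).not_odd_largest hfreq (n := 0) (fun i _ => (hπ i).2) hm
      exact ⟨x, fun v v' h hle =>
        ⟨(hx v v' ⟨h, hle⟩).1, fun heq _ => (hx v v' ⟨h, hle⟩).2 heq⟩⟩
    · exact ⟨fun _ => 0, fun _ _ _ _ => ⟨le_rfl, fun _ h => absurd h hm⟩⟩
  choose x hx using hmeasure
  let ι := (Set.range A.rank)ᵒᵈ
  let num : ι → ℕ := fun i => (OrderDual.ofDual i).1
  let cut : ℕ → (ι → Ordinal.{0}) → ι → Ordinal.{0} := fun m t i => if m ≤ num i then t i else 0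
  have hcut : ∀ m v v', N.R v v' → A.rank (ρ v) ≤ m →
      cut m (fun i => x (num i) v') ≤ cut m fun i => x (num i) v := by
    intro m v v' h hle i
    dsimp only [cut]
    split_ifs with hi
    · exact (hx _ v v' h (hle.trans hi)).1
    · exact le_rfl
  refine ⟨Lex (ι → Ordinal.{0}), inferInstance, inferInstance,
    fun k t => toLex (cut (A.rank k) (ofLex t)), fun v => toLex fun i => x (num i) v,
    fun k t t' h => ?_, fun v v' k h hle => ⟨Pi.toLex_monotone (hcut _ v v' h hle),
      fun heq hodd => Pi.toLex_strictMono (Pi.lt_def.2 ⟨hcut _ v v' h hle, ?_⟩)⟩⟩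
  · rcases h.eq_or_lt with rfl | ⟨i, hi, hlt⟩
    · exact le_rfl
    by_cases hki : A.rank k ≤ num i
    · refine le_of_lt ⟨i, fun j hj => ?_, ?_⟩
      · exact congrArg (fun y => if A.rank k ≤ num j then y else 0) (hi j hj)
      · simpa [cut, hki] using hlt
    · refine le_of_eq (congrArg toLex (funext fun j => ?_))
      dsimp only [cut]
      split_ifs with hj
      · exact hi j (OrderDual.ofDual_lt_ofDual.1 (show num i < num j by omega))
      · rfl
  · refine ⟨OrderDual.toDual ⟨A.rank k, k, rfl⟩, ?_⟩
    simpa [cut, num] using (hx _ v v' h hle).2 heq hodd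

/-- Progress measures at a point and a child of it give rise to a tracking step. -/
theorem OrderStep.of_measure {Q : Type} {L : Type*} [LinearOrder L] {rank : Q → ℕ}
    {E : Q → Q → Prop} {g : Tracked Q → Tracked Q} {x x' : Tracked Q → L}
    (hg : ∀ p, x' (g p) ≤ x p) (hg' : ∀ p p', x' p' ≤ x p → x' p' ≤ x' (g p))
    (hE : ∀ q q' k, E q q' → rank q ≤ rank k → x' (some (q', k)) ≤ x (some (q, k)) ∧
      (rank q = rank k → Odd (rank k) → x' (some (q', k)) < x (some (q, k)))) :
    OrderStep rank E g {p | x' (g p) < x p} {y | x y.1 ≤ x y.2} {y | x' y.1 ≤ x' y.2} := by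
  have heq : ∀ p, p ∉ {p | x' (g p) < x p} → x' (g p) = x p := fun p hp =>
    (hg p).antisymm (not_lt.1 hp)
  refine ⟨fun p => le_refl (x p), fun p p₁ hp hlt => ?_, fun p q q' k h hle hp => ?_,
    fun p q q' k h hrank hodd hpD hp => ?_, fun p q q' k h hle hpD hp => ?_⟩
  · have hlt' : x p₁ < x p := not_le.1 hlt
    refine not_le.2 ?_
    dsimp only
    rw [heq p hp]
    exact (hg p₁).trans_lt hlt'
  · exact hg' p _ ((hE q q' k h hle).1.trans hp)
  · refine not_le.2 ?_
    dsimp only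
    rw [heq p hpD]
    exact ((hE q q' k h hrank.le).2 hrank hodd).trans_le hp
  · have hlt' : x (some (q, k)) < x p := not_le.1 hp
    refine not_le.2 ?_
    dsimp only
    rw [heq p hpD]
    exact (hE q q' k h hle).1.trans_lt hlt'

/-- Quotients of trees accepted by `A` are accepted by the quotient automaton. -/
theorem satA_quotAutomaton_of_preimage {σ : Set ℕ} (A : NPTA σ) {d : ℕ} {M : Model}
    (hM : M ∈ TreeC d) {N : Model} (hN : SatA N A) {f : N.W → M.W}
    (hf : IsSigBisim N M Set.univ fun v w => f v = w) : SatA M (quotAutomaton A d) := by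
  classical
  obtain ⟨ρ, ⟨hρroot, hρ⟩, hacc⟩ := hN
  obtain ⟨hMtree, hMdeg⟩ := hM
  obtain ⟨L, _, _, tr, T, htr, hT⟩ := exists_signature hacc
  choose lN _ hlN hδ using hρ
  choose lM hlMnodup hlM hlMlen using fun w => hMdeg.exists_children w
  have hfR : ∀ v v', N.R v v' → M.R (f v) (f v') := fun v v' h => by
    obtain ⟨w', hw', rfl⟩ := hf.forth rfl v' h
    exact hw'
  have hrep : ∀ w q, ∃ v, (∃ u, f u = w ∧ ρ u = q) →
      (f v = w ∧ ρ v = q) ∧ ∀ u, f u = w → ρ u = q → T v ≤ T u := by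
    intro w q
    by_cases h : ∃ u, f u = w ∧ ρ u = q
    · obtain ⟨_, ⟨v, hv, rfl⟩, hmin⟩ := WellFounded.has_min (wellFounded_lt (α := L))
        (T '' {u | f u = w ∧ ρ u = q}) (Set.Nonempty.image _ h)
      exact ⟨v, fun _ => ⟨hv, fun u h₁ h₂ => not_lt.1 (hmin _ ⟨u, ⟨h₁, h₂⟩, rfl⟩)⟩⟩
    · exact ⟨N.root, fun h' => absurd h' h⟩
  choose rep hrep using hrep
  let S : M.W → Set A.Q := fun w => {q | ∃ u, f u = w ∧ ρ u = q}
  let X : M.W → Tracked A.Q → WithBot (WithTop L) := fun w p =>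
    if w = M.root then ((⊤ : WithTop L) : WithBot (WithTop L)) else
      p.elim ⊥ fun y => ((tr y.2 (T (rep w y.1)) : WithTop L) : WithBot (WithTop L))
  have hX : ∀ w w', M.R w w' → ∀ q q' k,
      (q ∈ S w ∧ ∃ v', N.R (rep w q) v' ∧ f v' = w' ∧ ρ v' = q') → A.rank q ≤ A.rank k →
      X w' (some (q', k)) ≤ X w (some (q, k)) ∧ (A.rank q = A.rank k → Odd (A.rank k) →
        X w' (some (q', k)) < X w (some (q, k))) := by
    rintro w w' hww' q q' k ⟨hq, v', hv', hfv', hρv'⟩ hle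
    have hw' : w' ≠ M.root := fun h => hMtree.2.1 w (h ▸ hww')
    obtain ⟨⟨-, hρv⟩, -⟩ := hrep w q hq
    have hmin : tr k (T (rep w' q')) ≤ tr k (T v') :=
      htr k ((hrep w' q' ⟨v', hfv', hρv'⟩).2 v' hfv' hρv')
    obtain ⟨hle', hlt'⟩ := hT _ v' k hv' (by rw [hρv]; exact hle)
    rw [hρv] at hlt'
    by_cases hw : w = M.root
    · have : X w' (some (q', k)) < X w (some (q, k)) := by
        simp only [X, hw, hw', if_true, if_false, Option.elim_some]
        exact WithBot.coe_lt_coe.2 (WithTop.coe_lt_top _)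
      exact ⟨this.le, fun _ _ => this⟩
    · simp only [X, hw, hw', if_false, Option.elim_some, WithBot.coe_le_coe, WithTop.coe_le_coe,
        WithBot.coe_lt_coe, WithTop.coe_lt_coe]
      exact ⟨hmin.trans hle', fun h₁ h₂ => hmin.trans_lt (hlt' h₁ h₂)⟩
  have hfloor : ∀ w w', ∃ g : Tracked A.Q → Tracked A.Q, M.R w w' →
      (∀ p, X w' (g p) ≤ X w p) ∧ ∀ p p', X w' p' ≤ X w p → X w' p' ≤ X w' (g p) := by
    intro w w'
    by_cases hww' : M.R w w'
    · have hw' : w' ≠ M.root := fun h => hMtree.2.1 w (h ▸ hww')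
      have : ∀ p, ∃ p₀, X w' p₀ ≤ X w p ∧ ∀ p', X w' p' ≤ X w p → X w' p' ≤ X w' p₀ := fun p =>
        Set.exists_max_image {p' | X w' p' ≤ X w p} (X w') (Set.toFinite _)
          ⟨none, by simp [X, hw']⟩
      choose g hg hg' using this
      exact ⟨g, fun _ => ⟨hg, hg'⟩⟩
    · exact ⟨id, fun h => absurd h hww'⟩
  choose g hg using hfloor
  let D : M.W → M.W → Set (Tracked A.Q) := fun w w' => {p | X w' (g w w' p) < X w p}
  choose next hnext_inj hnext using fun (u : Tracked A.Q → Tracked A.Q)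
    (a : {a : Tracked A.Q → Fin (Fintype.card (Tracked A.Q)) // Function.Injective a}) =>
      exists_ageStep u a.2
  obtain ⟨record, hrec₀, hrec⟩ := hMtree.exists_recursive
    (α := {a : Tracked A.Q → Fin (Fintype.card (Tracked A.Q)) // Function.Injective a} ×
      Fin (2 * Fintype.card (Tracked A.Q) + 1))
    (⟨Fintype.equivFin _, Equiv.injective _⟩, 0)
    (fun w w' y => (⟨next (g w w') y.1, hnext_inj _ _⟩,
      ⟨stepPriority (g w w') (D w w') y.1.1 (next (g w w') y.1),
        Nat.lt_succ_of_le (stepPriority_le _ _ _ _)⟩))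
  have hage : ∀ w w', M.R w w' → AgeStep (g w w') (record w).1.1 (record w').1.1 := fun w w' h => by
    rw [hrec w w' h]
    exact hnext _ _
  have hprio : ∀ w w', M.R w w' → ((record w').2 : ℕ) =
      stepPriority (g w w') (D w w') (record w).1.1 (record w').1.1 := fun w w' h => by
    rw [hrec w w' h]
  let ρ' : M.W → QuotState A.Q := fun w =>
    ⟨S w, {y | X w y.1 ≤ X w y.2}, (record w).1.1, (record w).2⟩
  refine ⟨ρ', ⟨?_, fun w => ⟨lM w, hlMnodup w, hlM w, ?_, ?_⟩⟩, fun π hπ => ?_⟩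
  · have hS : S M.root = {A.qI} := by
      ext q
      constructor
      · rintro ⟨u, hu, rfl⟩
        obtain ⟨k, h₁, h₂⟩ := hf.depthEq hu
        cases k with
        | zero =>
          rw [show u = N.root from h₁]
          exact hρroot
        | succ k =>
          obtain ⟨w, -, hw⟩ := h₂
          exact absurd hw (hMtree.2.1 w)
      · rintro rfl
        exact ⟨N.root, hf.root, hρroot⟩
    refine QuotState.ext hS ?_ ?_ ?_
    · exact Set.eq_univ_of_forall fun y => by simp [ρ', X]
    · exact congrArg (fun y => y.1.1) hrec₀
    · exact congrArg Prod.snd hrec₀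
  · exact (List.length_map ρ').trans_le (hlMlen w)
  · change IsQuotTransition A (ρ' w) (σ ∩ {p | M.val w p}) ((lM w).map ρ')
    have hidx : ∀ q ∈ S w, ∀ v', N.R (rep w q) v' →
        (lM w)[(lM w).idxOf (f v')]? = some (f v') := by
      intro q hq v' hv'
      refine List.getElem?_idxOf ((hlM w _).2 ?_)
      rw [← (hrep w q hq).1.1]
      exact hfR _ _ hv'
    refine ⟨fun q => (lN (rep w q)).map fun v' => (ρ v', (lM w).idxOf (f v')),
      fun q hq => ⟨?_, ?_, ?_⟩, fun i b' hb' => ?_⟩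
    · obtain ⟨⟨hfw, hρq⟩, -⟩ := hrep w q hq
      have hval : {p | N.val (rep w q) p} = {p | M.val w p} :=
        Set.ext fun p => hf.base hfw p (Set.mem_univ p)
      have := hδ (rep w q)
      rw [hρq, hval] at this
      simpa [Function.comp_def] using this
    · intro x hx
      obtain ⟨v', hv', rfl⟩ := List.mem_map.1 hx
      refine ⟨ρ' (f v'), ?_, v', rfl, rfl⟩
      rw [List.getElem?_map, hidx q hq v' ((hlN _ _).1 hv'), Option.map_some]
    · intro i hi
      rw [List.length_map] at hi
      obtain ⟨v', hv', hfv'⟩ := hf.back (hrep w q hq).1.1 _ ((hlM w _).1 (List.getElem_mem hi))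
      refine ⟨ρ v', List.mem_map.2 ⟨v', (hlN _ _).2 hv', ?_⟩⟩
      rw [hfv', (hlMnodup w).idxOf_getElem]
    · rw [List.getElem?_map, Option.map_eq_some_iff] at hb'
      obtain ⟨w', hw', rfl⟩ := hb'
      have hR : M.R w w' := (hlM w w').1 (List.mem_of_getElem? hw')
      refine ⟨g w w', D w w', OrderStep.of_measure (hg w w' hR).1 (hg w w' hR).2 ?_,
        hage w w' hR, hprio w w' hR⟩
      rintro q q' k ⟨hq, hmem⟩
      refine hX w w' hR q q' k ⟨hq, ?_⟩
      obtain ⟨v', hv', heq⟩ := List.mem_map.1 hmem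
      obtain ⟨rfl, rfl⟩ := Prod.mk.inj heq
      have hv'R := (hlN _ _).1 hv'
      exact ⟨v', hv'R, Option.some.inj ((hidx q hq v' hv'R).symm.trans hw'), rfl⟩
  · exact parityGood_stepPriority (fun t => hage (π t) (π (t + 1)) (hπ t))
      (Nat.lt_succ_iff.1 (record (π 0)).2.2)
      (fun t => hprio (π t) (π (t + 1)) (hπ t)) (x := fun t => X (π t)) (fun t => (hg _ _ (hπ t)).1)
      fun t p hp => hp

/-- for every NPTA `A` over `T^d` there is an NPTA `B` over `T^d`, of at most
exponentially many states, recognizing the bisimulation quotients of the trees from `L(A)`. -/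
theorem stmt_13 : ∃ c : ℕ, ∀ (d : ℕ) (σ : Set ℕ), σ.Finite → ∀ A : NPTA σ,
    (∀ q ch l, l ∈ A.δ q ch → l.length ≤ d) →
    ∃ B : NPTA σ, (∀ q ch l, l ∈ B.δ q ch → l.length ≤ d) ∧
      B.card ≤ 2 ^ ((A.card + 2) ^ c) ∧
      ∀ M ∈ TreeC d, (SatA M B ↔ ∃ N ∈ TreeC d, SatA N A ∧
        ∃ f : N.W → M.W, IsSigBisim N M Set.univ fun v w => f v = w) := by
  refine ⟨8, fun d σ _ A hA => ⟨quotAutomaton A d, fun q ch l hl => hl.1, QuotState.card_le,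
    fun M hM => ⟨exists_preimage_of_satA_quotAutomaton A hA M, ?_⟩⟩⟩
  rintro ⟨N, -, hN, f, hf⟩
  exact satA_quotAutomaton_of_preimage A hM hN hf
end

section
/- Let θ_∞ = νx.◇x (expressing the existence of an infinite path from the root). For all modal μ-calculus formulae φ, φ' and every ML-formula ψ: ψ is an ML-separator of φ, φ' over the class of finite trees if and only if ψ is an ML-separator of φ ∧ ¬θ_∞ and φ' ∧ ¬θ_∞ over the class of all models. The same equivalence holds with both classes relativized to T^d, for every d ∈ ℕ. -/
/-- `θ_∞ = νx.◇x`: there is an infinite path from the root. -/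
def thetaInf : Form := .nu 0 (.dia (.var 0))

/-- `¬θ_∞ = μx.□x` (in negation normal form). -/
def negThetaInf : Form := .mu 0 (.box (.var 0))

namespace Model

/-- `w` starts no infinite path. -/
def WFAt (M : Model) (w : M.W) : Prop := Acc (flip M.R) w

theorem WFAt.succ {M : Model} {w v : M.W} (h : M.WFAt w) (hv : M.R w v) : M.WFAt v :=
  Acc.inv h hv

theorem interp_mono (M : Model) (φ : Form) : Monotone (M.interp φ) := by
  have update_mono : ∀ {e e' : ℕ → Set M.W} (x : ℕ) (S : Set M.W), e ≤ e' →
      Function.update e x S ≤ Function.update e' x S := fun x S h =>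
    update_le_update_iff.2 ⟨le_rfl, fun y _ => h y⟩
  induction φ with
  | pos p => exact fun _ _ _ => le_rfl
  | neg p => exact fun _ _ _ => le_rfl
  | or φ ψ ih₁ ih₂ => exact fun e e' h => Set.union_subset_union (ih₁ h) (ih₂ h)
  | and φ ψ ih₁ ih₂ => exact fun e e' h => Set.inter_subset_inter (ih₁ h) (ih₂ h)
  | dia φ ih => exact fun e e' h w ⟨v, hv, hw⟩ => ⟨v, hv, ih h hw⟩
  | box φ ih => exact fun e e' h w hw v hv => ih h (hw v hv)
  | var x => exact fun e e' h => h x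
  | mu x φ ih =>
    exact fun e e' h => sInf_le_sInf fun S hS => (ih (update_mono x S h)).trans hS
  | nu x φ ih =>
    exact fun e e' h => sSup_le_sSup fun S hS => le_trans hS (ih (update_mono x S h))

/-- The monotone operator on sets defined by `φ` as a function of the variable `x`. -/
def opHom (M : Model) (φ : Form) (x : ℕ) (e : ℕ → Set M.W) : Set M.W →o Set M.W where
  toFun S := M.interp φ (Function.update e x S)
  monotone' _ _ h := M.interp_mono φ (update_le_update_iff.2 ⟨h, fun _ _ => le_rfl⟩)

theorem interp_mu_unfold (M : Model) (φ : Form) (x : ℕ) (e : ℕ → Set M.W) :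
    M.interp φ (Function.update e x (M.interp (.mu x φ) e)) = M.interp (.mu x φ) e :=
  (M.opHom φ x e).map_lfp

theorem interp_nu_unfold (M : Model) (φ : Form) (x : ℕ) (e : ℕ → Set M.W) :
    M.interp φ (Function.update e x (M.interp (.nu x φ) e)) = M.interp (.nu x φ) e :=
  (M.opHom φ x e).map_gfp

theorem sat_negThetaInf_iff (M : Model) : M.Sat negThetaInf ↔ M.WFAt M.root := by
  constructor
  · intro h
    refine Set.mem_sInter.1 h {w | M.WFAt w} fun w hw => Acc.intro w fun v hv => ?_
    have hv' := hw v hv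
    simp only [interp, Function.update_self] at hv'
    exact hv'
  · intro h
    refine Set.mem_sInter.2 fun S hS => ?_
    generalize M.root = w at h
    induction h with
    | intro w _ ih => exact hS fun v hv => by simpa [interp] using ih v hv

theorem sat_and_negThetaInf_iff (M : Model) (φ : Form) :
    M.Sat (.and φ negThetaInf) ↔ M.Sat φ ∧ M.WFAt M.root :=
  and_congr_right fun _ => M.sat_negThetaInf_iff

theorem IsTree.not_transGen_self {M : Model} (hM : M.IsTree) (w : M.W) :
    ¬ Relation.TransGen M.R w w := by
  induction hM.1 w with
  | refl =>
    intro h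
    obtain ⟨z, _, hz⟩ := Relation.TransGen.tail'_iff.1 h
    exact hM.2.1 z hz
  | @tail v w _ hvw ih =>
    intro h
    obtain ⟨z, hwz, hz⟩ := Relation.TransGen.tail'_iff.1 h
    obtain rfl := hM.2.2 _ _ _ hvw hz
    exact ih (Relation.TransGen.head' hvw hwz)

theorem IsTree.wfAt_of_finite {M : Model} (hM : M.IsTree) [Finite M.W] (w : M.W) :
    M.WFAt w := by
  let r : M.W → M.W → Prop := fun v u => Relation.TransGen M.R u v
  have : IsTrans M.W r := ⟨fun _ _ _ h₁ h₂ => Relation.TransGen.trans h₂ h₁⟩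
  have : Std.Irrefl r := ⟨fun u => hM.not_transGen_self u⟩
  have hwf : WellFounded r := Finite.wellFounded_of_trans_of_irrefl r
  have hsub : Subrelation (flip M.R) r := fun h => Relation.TransGen.single h
  exact hsub.accessible (hwf.apply w)

theorem outdegLE.finite_succ {M : Model} {d : ℕ} (hd : M.outdegLE d) (w : M.W) :
    {v | M.R w v}.Finite := by
  by_contra h
  have f := Set.Infinite.natEmbedding _ h
  exact hd w ⟨fun i => f i, fun i j hij => Fin.ext (f.injective (Subtype.ext hij)),
    fun i => (f i).2⟩

theorem IsTree.finite_of_wfAt {M : Model} (hM : M.IsTree) {d : ℕ} (hd : M.outdegLE d)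
    (h : M.WFAt M.root) : Finite M.W := by
  have key : ∀ w, M.WFAt w → {v | Relation.ReflTransGen M.R w v}.Finite := by
    intro w hw
    induction hw with
    | intro w _ ih =>
      refine ((Set.finite_singleton w).union ((hd.finite_succ w).biUnion ih)).subset ?_
      intro v hv
      rcases Relation.ReflTransGen.cases_head hv with rfl | ⟨u, hu, huv⟩
      · exact Or.inl rfl
      · exact Or.inr (Set.mem_biUnion hu huv)
  exact Set.finite_univ_iff.1 ((key _ h).subset fun v _ => hM.1 v)

/-- The accessibility relation of the tree obtained by grafting trees below a new root. -/
inductive GraftR {ι : Type} (N : ι → Model) :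
    Option (Σ i, (N i).W) → Option (Σ i, (N i).W) → Prop
  | root (i : ι) : GraftR N none (some ⟨i, (N i).root⟩)
  | step (i : ι) (u v : (N i).W) : (N i).R u v → GraftR N (some ⟨i, u⟩) (some ⟨i, v⟩)

/-- Grafting a family of models below a new root with valuation `V`. -/
def graft {ι : Type} (N : ι → Model) (V : ℕ → Prop) : Model where
  W := Option (Σ i, (N i).W)
  root := none
  R := GraftR N
  val w := w.elim V fun p => (N p.1).val p.2

theorem isTree_graft {ι : Type} {N : ι → Model} (V : ℕ → Prop) (hN : ∀ i, (N i).IsTree) :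
    (graft N V).IsTree := by
  refine ⟨?_, ?_, ?_⟩
  · rintro (_ | ⟨i, u⟩)
    · exact .refl
    · refine Relation.ReflTransGen.head (GraftR.root i) ?_
      exact Relation.ReflTransGen.lift (fun u => (some ⟨i, u⟩ : Option (Σ i, (N i).W)))
        (fun u v h => GraftR.step i u v h) _ _ ((hN i).1 u)
  · intro w h
    cases h
  · intro w v v' h h'
    cases h with
    | root i =>
      generalize hz : (some ⟨i, (N i).root⟩ : Option (Σ i, (N i).W)) = z at h'
      cases h' with
      | root j => rfl
      | step j a b hab =>
        cases hz
        exact ((hN i).2.1 _ hab).elim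
    | step i u z hu =>
      generalize hy : (some ⟨i, z⟩ : Option (Σ i, (N i).W)) = y at h'
      cases h' with
      | root j =>
        cases hy
        exact ((hN i).2.1 _ hu).elim
      | step j a b hab =>
        cases hy
        rw [(hN i).2.2 _ _ _ hu hab]

end Model

/-- Deterministic bottom-up automata: the state of a point is computed from its valuation,
the variables true at it, and the set of states of its successors. -/
structure TreeAut where
  T : Type
  fin : Finite T
  step : (ℕ → Prop) → (ℕ → Prop) → Set T → T

namespace TreeAut

/-- `tp` is the run of `A` on the well-founded part of `M` in environment `e`. -/
def IsRun (A : TreeAut) (M : Model) (e : ℕ → Set M.W) (tp : M.W → A.T) : Prop :=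
  ∀ w, M.WFAt w → tp w = A.step (M.val w) (fun x => w ∈ e x) (tp '' {v | M.R w v})

/-- On well-founded parts, `φ` holds exactly where the state lies in `F`. -/
def Recognizes (A : TreeAut) (F : Set A.T) (φ : Form) : Prop :=
  ∀ (M : Model) (e : ℕ → Set M.W) (tp : M.W → A.T), A.IsRun M e tp →
    ∀ w, M.WFAt w → (w ∈ M.interp φ e ↔ tp w ∈ F)

theorem exists_isRun (A : TreeAut) (M : Model) (e : ℕ → Set M.W) : ∃ tp, A.IsRun M e tp := by
  let r : M.W → M.W → Prop := fun v w => M.WFAt w ∧ M.R w v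
  have hr : WellFounded r := by
    refine ⟨fun w => Acc.intro w fun v hv => ?_⟩
    exact Subrelation.accessible (fun h => h.2) (hv.1.succ hv.2)
  refine ⟨hr.fix fun w ih => A.step (M.val w) (fun x => w ∈ e x)
    {t | ∃ v, ∃ h : r v w, ih v h = t}, fun w hw => ?_⟩
  rw [hr.fix_eq]
  congr 1
  ext t
  constructor
  · rintro ⟨v, h, rfl⟩
    exact ⟨v, h.2, rfl⟩
  · rintro ⟨v, h, rfl⟩
    exact ⟨v, ⟨hw, h⟩, rfl⟩

/-- The product automaton. -/
def prod (A B : TreeAut) : TreeAut where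
  T := A.T × B.T
  fin := by
    have := A.fin
    have := B.fin
    infer_instance
  step V E P := (A.step V E (Prod.fst '' P), B.step V E (Prod.snd '' P))

theorem IsRun.fst {A B : TreeAut} {M : Model} {e : ℕ → Set M.W} {tp : M.W → A.T × B.T}
    (h : (A.prod B).IsRun M e tp) : A.IsRun M e fun w => (tp w).1 := fun w hw => by
  have := congrArg Prod.fst (h w hw)
  simpa only [prod, Set.image_image] using this

theorem IsRun.snd {A B : TreeAut} {M : Model} {e : ℕ → Set M.W} {tp : M.W → A.T × B.T}
    (h : (A.prod B).IsRun M e tp) : B.IsRun M e fun w => (tp w).2 := fun w hw => by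
  have := congrArg Prod.snd (h w hw)
  simpa only [prod, Set.image_image] using this

/-- `A` extended by one bit `bit V E P`, where `P` is the set of states of the successors; the
bit may also be fed to the variable assignment read by `A`. -/
def withBit (A : TreeAut) (bit : (ℕ → Prop) → (ℕ → Prop) → Set A.T → Prop)
    (feed : (ℕ → Prop) → Prop → ℕ → Prop) : TreeAut where
  T := A.T × Prop
  fin := by
    have := A.fin
    infer_instance
  step V E P := (A.step V (feed E (bit V E (Prod.fst '' P))) (Prod.fst '' P),
    bit V E (Prod.fst '' P))

theorem IsRun.withBit_bit {A : TreeAut} {bit feed} {M : Model} {e : ℕ → Set M.W}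
    {tp : M.W → A.T × Prop} (h : (A.withBit bit feed).IsRun M e tp) {w : M.W} (hw : M.WFAt w) :
    (tp w).2 = bit (M.val w) (fun x => w ∈ e x) ((fun v => (tp v).1) '' {v | M.R w v}) := by
  have := congrArg Prod.snd (h w hw)
  simpa only [withBit, Set.image_image] using this

theorem IsRun.withBit_state {A : TreeAut} {bit feed} {M : Model} {e : ℕ → Set M.W}
    {tp : M.W → A.T × Prop} (h : (A.withBit bit feed).IsRun M e tp) {w : M.W} (hw : M.WFAt w) :
    (tp w).1 = A.step (M.val w) (feed (fun x => w ∈ e x) (tp w).2)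
      ((fun v => (tp v).1) '' {v | M.R w v}) := by
  rw [h.withBit_bit hw]
  have := congrArg Prod.fst (h w hw)
  simpa only [withBit, Set.image_image] using this

/-- The automaton for a fixpoint formula: the bit is the first iterate of the fixpoint at the
current point, starting from the truth value `c`. -/
def fix (A : TreeAut) (F : Set A.T) (x : ℕ) (c : Prop) : TreeAut :=
  A.withBit (fun V E P => A.step V (Function.update E x c) P ∈ F)
    (fun E b => Function.update E x b)

theorem mem_update {W : Type} (e : ℕ → Set W) (x : ℕ) (S : Set W) (w : W) :
    (fun y => w ∈ Function.update e x S y) =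
      Function.update (fun y => w ∈ e y) x (w ∈ S) := by
  funext y
  by_cases h : y = x
  · subst h
    simp
  · simp [h]

section Fix

variable {A : TreeAut} {F : Set A.T} {φ : Form} {x : ℕ} {c : Prop} {M : Model}
  {e : ℕ → Set M.W} {tp : M.W → A.T × Prop}

theorem Recognizes.mem_interp_of_bit (hA : A.Recognizes F φ) (h : (A.fix F x c).IsRun M e tp)
    {S : Set M.W} (hS : ∀ w, M.WFAt w → (w ∈ S ↔ (tp w).2)) {w : M.W} (hw : M.WFAt w)
    (hc : (tp w).2 ↔ c) : w ∈ M.interp φ (Function.update e x S) ↔ (tp w).2 := by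
  have hrun : A.IsRun M (Function.update e x S) fun w => (tp w).1 := fun w hw => by
    rw [mem_update, propext (hS w hw)]
    exact IsRun.withBit_state h hw
  have hbit := IsRun.withBit_bit h hw
  rw [← propext hc] at hbit
  rw [hA M _ _ hrun w hw, IsRun.withBit_state h hw]
  exact Iff.of_eq hbit.symm

theorem Recognizes.mem_fixpoint_iff (hA : A.Recognizes F φ) (h : (A.fix F x c).IsRun M e tp)
    {L : Set M.W} (hL : M.interp φ (Function.update e x L) = L)
    (hc : ∀ w, M.WFAt w → ((w ∈ L ↔ c) ∨ (w ∈ L ↔ (tp w).2))) {w : M.W} (hw : M.WFAt w) :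
    w ∈ L ↔ (tp w).2 := by
  obtain ⟨tpL, htpL⟩ := A.exists_isRun M (Function.update e x L)
  suffices tpL w = (tp w).1 ∧ (w ∈ L ↔ (tp w).2) from this.2
  have hacc : Acc (flip M.R) w := hw
  induction hacc with
  | intro w _ ih =>
    have himg : tpL '' {v | M.R w v} = (fun v => (tp v).1) '' {v | M.R w v} :=
      Set.image_congr fun v hv => (ih v hv (hw.succ hv)).1
    have hstep := htpL w hw
    rw [mem_update, himg] at hstep
    have hiff : w ∈ L ↔ (tp w).2 := by
      rcases hc w hw with h' | h'
      · have hmem := hA M _ _ htpL w hw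
        rw [hL, hstep, propext h'] at hmem
        rw [propext h', IsRun.withBit_bit h hw]
        exact hmem
      · exact h'
    refine ⟨?_, hiff⟩
    rw [hstep, propext hiff]
    exact (IsRun.withBit_state h hw).symm

end Fix

theorem Recognizes.mu {A : TreeAut} {F : Set A.T} {φ : Form} (hA : A.Recognizes F φ) (x : ℕ) :
    (A.fix F x False).Recognizes {t : A.T × Prop | t.2} (.mu x φ) := by
  intro M e tp h w hw
  have hle : M.interp (.mu x φ) e ⊆ {w | M.WFAt w → (tp w).2} := by
    refine sInf_le fun w hw hwf => by_contra fun hb => hb ?_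
    exact (hA.mem_interp_of_bit (S := {w | M.WFAt w → (tp w).2}) h
      (fun v hv => ⟨fun h' => h' hv, fun h' _ => h'⟩) hwf
      (iff_false_intro hb)).1 hw
  refine hA.mem_fixpoint_iff h (M.interp_mu_unfold φ x e) (fun v hv => ?_) hw
  by_cases hvL : v ∈ M.interp (.mu x φ) e
  · exact Or.inr (iff_of_true hvL (hle hvL hv))
  · exact Or.inl (iff_false_intro hvL)

theorem Recognizes.nu {A : TreeAut} {F : Set A.T} {φ : Form} (hA : A.Recognizes F φ) (x : ℕ) :
    (A.fix F x True).Recognizes {t : A.T × Prop | t.2} (.nu x φ) := by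
  intro M e tp h w hw
  have hle : {w | M.WFAt w ∧ (tp w).2} ⊆ M.interp (.nu x φ) e := by
    refine le_sSup fun w hw => ?_
    exact (hA.mem_interp_of_bit (S := {w | M.WFAt w ∧ (tp w).2}) h
      (fun v hv => ⟨fun h' => h'.2, fun h' => ⟨hv, h'⟩⟩) hw.1
      (iff_true_intro hw.2)).2 hw.2
  refine hA.mem_fixpoint_iff h (M.interp_nu_unfold φ x e) (fun v hv => ?_) hw
  by_cases hvL : v ∈ M.interp (.nu x φ) e
  · exact Or.inl (iff_true_intro hvL)
  · exact Or.inr (iff_of_false hvL fun hb => hvL (hle ⟨hv, hb⟩))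

theorem Recognizes.dia {A : TreeAut} {F : Set A.T} {φ : Form} (hA : A.Recognizes F φ) :
    (A.withBit (fun _ _ P => ∃ t ∈ P, t ∈ F) fun E _ => E).Recognizes
      {t : A.T × Prop | t.2} (.dia φ) := by
  intro M e tp h w hw
  have hrun : A.IsRun M e fun w => (tp w).1 := fun w hw => IsRun.withBit_state h hw
  change _ ↔ (tp w).2
  rw [IsRun.withBit_bit h hw, Set.exists_mem_image]
  exact exists_congr fun v => and_congr_right fun hv => hA M e _ hrun v (hw.succ hv)

theorem Recognizes.box {A : TreeAut} {F : Set A.T} {φ : Form} (hA : A.Recognizes F φ) :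
    (A.withBit (fun _ _ P => ∀ t ∈ P, t ∈ F) fun E _ => E).Recognizes
      {t : A.T × Prop | t.2} (.box φ) := by
  intro M e tp h w hw
  have hrun : A.IsRun M e fun w => (tp w).1 := fun w hw => IsRun.withBit_state h hw
  change _ ↔ (tp w).2
  rw [IsRun.withBit_bit h hw, Set.forall_mem_image]
  exact forall_congr' fun v => imp_congr_right fun hv => hA M e _ hrun v (hw.succ hv)

/-- The automaton computing a property of the current point only. -/
def ofLocal (b : (ℕ → Prop) → (ℕ → Prop) → Prop) : TreeAut where
  T := Prop
  fin := inferInstance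
  step V E _ := b V E

theorem IsRun.ofLocal_iff {b : (ℕ → Prop) → (ℕ → Prop) → Prop} {M : Model} {e : ℕ → Set M.W}
    {tp : M.W → Prop} (h : (ofLocal b).IsRun M e tp) {w : M.W} (hw : M.WFAt w) :
    b (M.val w) (fun x => w ∈ e x) ↔ tp w :=
  Iff.of_eq (h w hw).symm

theorem exists_recognizes (φ : Form) : ∃ (A : TreeAut) (F : Set A.T), A.Recognizes F φ := by
  induction φ with
  | pos p => exact ⟨ofLocal fun V _ => V p, {t : Prop | t}, fun M e tp h w hw => h.ofLocal_iff hw⟩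
  | neg p =>
    exact ⟨ofLocal fun V _ => ¬ V p, {t : Prop | t}, fun M e tp h w hw => h.ofLocal_iff hw⟩
  | var x => exact ⟨ofLocal fun _ E => E x, {t : Prop | t}, fun M e tp h w hw => h.ofLocal_iff hw⟩
  | or φ ψ ih₁ ih₂ =>
    obtain ⟨A, F, hA⟩ := ih₁
    obtain ⟨B, G, hB⟩ := ih₂
    exact ⟨A.prod B, {t : A.T × B.T | t.1 ∈ F ∨ t.2 ∈ G}, fun M e tp h w hw =>
      or_congr (hA M e _ (IsRun.fst h) w hw) (hB M e _ (IsRun.snd h) w hw)⟩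
  | and φ ψ ih₁ ih₂ =>
    obtain ⟨A, F, hA⟩ := ih₁
    obtain ⟨B, G, hB⟩ := ih₂
    exact ⟨A.prod B, {t : A.T × B.T | t.1 ∈ F ∧ t.2 ∈ G}, fun M e tp h w hw =>
      and_congr (hA M e _ (IsRun.fst h) w hw) (hB M e _ (IsRun.snd h) w hw)⟩
  | dia φ ih =>
    obtain ⟨A, F, hA⟩ := ih
    exact ⟨_, _, hA.dia⟩
  | box φ ih =>
    obtain ⟨A, F, hA⟩ := ih
    exact ⟨_, _, hA.box⟩
  | mu x φ ih =>
    obtain ⟨A, F, hA⟩ := ih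
    exact ⟨_, _, hA.mu x⟩
  | nu x φ ih =>
    obtain ⟨A, F, hA⟩ := ih
    exact ⟨_, _, hA.nu x⟩

/-- Every state reached at a well-founded point is reached at the root of a finite tree. -/
theorem exists_finite_tree (A : TreeAut) {M : Model} {tp : M.W → A.T}
    (h : A.IsRun M (fun _ => ∅) tp) {w : M.W} (hw : M.WFAt w) :
    ∃ N : Model, N.IsTree ∧ Finite N.W ∧
      ∃ tpN : N.W → A.T, A.IsRun N (fun _ => ∅) tpN ∧ tpN N.root = tp w := by
  have hacc : Acc (flip M.R) w := hw
  induction hacc with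
  | intro w _ ih =>
    have hch : ∀ t : tp '' {v | M.R w v}, ∃ N : Model, N.IsTree ∧ Finite N.W ∧
        ∃ tpN : N.W → A.T, A.IsRun N (fun _ => ∅) tpN ∧ tpN N.root = t := by
      rintro ⟨_, v, hv, rfl⟩
      exact ih v hv (hw.succ hv)
    choose N hN hfin tpN hrun hroot using hch
    have := A.fin
    have htree := Model.isTree_graft (M.val w) hN
    refine ⟨Model.graft N (M.val w), htree, ?_,
      fun u => Option.elim u (tp w) fun p => tpN p.1 p.2, ?_, rfl⟩
    · exact inferInstanceAs (Finite (Option (Σ i, (N i).W)))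
    · rintro (_ | ⟨i, u⟩) _
      · refine (h w hw).trans (congrArg (A.step (M.val w) _) ?_)
        ext t
        constructor
        · intro ht
          exact ⟨some ⟨⟨t, ht⟩, (N ⟨t, ht⟩).root⟩, Model.GraftR.root _, hroot _⟩
        · rintro ⟨v, hv, rfl⟩
          cases hv with
          | root i => exact Set.mem_of_eq_of_mem (hroot i) i.2
      · have := hfin i
        refine (hrun i u ((hN i).wfAt_of_finite u)).trans
          (congrArg (A.step ((N i).val u) _) ?_)
        ext t
        constructor
        · rintro ⟨v, hv, rfl⟩
          exact ⟨some ⟨i, v⟩, Model.GraftR.step i u v hv, rfl⟩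
        · rintro ⟨v, hv, rfl⟩
          cases hv with
          | step _ _ v hv => exact ⟨v, hv, rfl⟩

end TreeAut

/-- Finite model property over models without infinite paths, for two formulae at once. -/
theorem Model.WFAt.exists_finite_tree_sat_iff {M : Model} (hM : M.WFAt M.root) (φ ψ : Form) :
    ∃ N : Model, (N.IsTree ∧ Finite N.W) ∧ (N.Sat φ ↔ M.Sat φ) ∧ (N.Sat ψ ↔ M.Sat ψ) := by
  obtain ⟨A, F, hA⟩ := TreeAut.exists_recognizes φ
  obtain ⟨B, G, hB⟩ := TreeAut.exists_recognizes ψ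
  obtain ⟨tp, htp⟩ := (A.prod B).exists_isRun M fun _ => ∅
  obtain ⟨N, hN, hfin, tpN, htpN, hroot⟩ := (A.prod B).exists_finite_tree htp hM
  have hwf := hN.wfAt_of_finite N.root
  refine ⟨N, ⟨hN, hfin⟩, ?_, ?_⟩
  · refine (hA N _ _ (TreeAut.IsRun.fst htpN) _ hwf).trans ?_
    rw [hroot]
    exact (hA M _ _ (TreeAut.IsRun.fst htp) _ hM).symm
  · refine (hB N _ _ (TreeAut.IsRun.snd htpN) _ hwf).trans ?_
    rw [hroot]
    exact (hB M _ _ (TreeAut.IsRun.snd htp) _ hM).symm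

theorem Separates.and_negThetaInf {C D : Set Model} {φ φ' ψ : Form}
    (hCD : ∀ M ∈ D, M.WFAt M.root → ∀ χ : Form,
      ∃ N ∈ C, (N.Sat χ ↔ M.Sat χ) ∧ (N.Sat ψ ↔ M.Sat ψ))
    (h : Separates C ψ φ φ') :
    Separates D ψ (.and φ negThetaInf) (.and φ' negThetaInf) := by
  refine ⟨fun M hM hφ => ?_, fun M hM hψ hφ' => ?_⟩
  · obtain ⟨hφ, hwf⟩ := (M.sat_and_negThetaInf_iff φ).1 hφ
    obtain ⟨N, hN, hNφ, hNψ⟩ := hCD M hM hwf φ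
    exact hNψ.1 (h.1 N hN (hNφ.2 hφ))
  · obtain ⟨hφ', hwf⟩ := (M.sat_and_negThetaInf_iff φ').1 hφ'
    obtain ⟨N, hN, hNφ', hNψ⟩ := hCD M hM hwf φ'
    exact h.2 N hN (hNψ.2 hψ) (hNφ'.2 hφ')

theorem Separates.of_and_negThetaInf {C D : Set Model} {φ φ' ψ : Form}
    (hCD : ∀ M ∈ C, M ∈ D ∧ M.WFAt M.root)
    (h : Separates D ψ (.and φ negThetaInf) (.and φ' negThetaInf)) :
    Separates C ψ φ φ' := by
  refine ⟨fun M hM hφ => ?_, fun M hM hψ hφ' => ?_⟩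
  · exact h.1 M (hCD M hM).1 ((M.sat_and_negThetaInf_iff φ).2 ⟨hφ, (hCD M hM).2⟩)
  · exact h.2 M (hCD M hM).1 hψ ((M.sat_and_negThetaInf_iff φ').2 ⟨hφ', (hCD M hM).2⟩)

/-- `ψ` separates `φ, φ'` over finite trees iff it separates
`φ ∧ ¬θ_∞, φ' ∧ ¬θ_∞` over all models; and the same relativized to `T^d`. -/
theorem stmt_18 (φ φ' ψ : Form) (hψ : ψ.IsML) :
    (Separates {M : Model | M.IsTree ∧ Finite M.W} ψ φ φ' ↔
      Separates Set.univ ψ (Form.and φ negThetaInf) (Form.and φ' negThetaInf)) ∧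
    (∀ d : ℕ, Separates {M : Model | M ∈ TreeC d ∧ Finite M.W} ψ φ φ' ↔
      Separates (TreeC d) ψ (Form.and φ negThetaInf) (Form.and φ' negThetaInf)) := by
  refine ⟨⟨?_, ?_⟩, fun d => ⟨?_, ?_⟩⟩
  · exact Separates.and_negThetaInf fun M _ hwf χ => hwf.exists_finite_tree_sat_iff χ ψ
  · refine Separates.of_and_negThetaInf fun M hM => ⟨Set.mem_univ M, ?_⟩
    have := hM.2
    exact hM.1.wfAt_of_finite _
  · exact Separates.and_negThetaInf fun M hM hwf _ =>
      ⟨M, ⟨hM, hM.1.finite_of_wfAt hM.2 hwf⟩, Iff.rfl, Iff.rfl⟩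
  · refine Separates.of_and_negThetaInf fun M hM => ⟨hM.1, ?_⟩
    have := hM.2
    exact hM.1.1.wfAt_of_finite _
end
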